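/- arXiv:1211.3171 — 2 statements merged into one kernel-verified Lean document; each statement's English description precedes it below -/
import Mathlib

section
/- Let (X,d) be a proper metric space and μ a Borel measure on X with 0 < μ(U) < ∞ for every nonempty bounded open set U ⊆ X. Let x₀ ∈ X, C > 0, C₀ ≥ 1, and assume (CKN)_C^{x₀}, (VD)^n_{C₀} and (AR)^n_{x₀} hold. Then for every λ > 0, (∫_X (λ+d(x₀,x)^{2-ap})^{(2-n)p/(2-ap)}·d(x₀,x)^{-ap} dμ(x))^{2/p} ≤ C²·(n-2)²·∫_X (λ+d(x₀,x)^{2-ap})^{2(ap-n)/(2-ap)}·d(x₀,x)^{2-2ap} dμ(x). -/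
/-!
The inequality is `(CKN)` applied to the radial function `φ(d(x₀,·))`, where
`φ(t) = (λ + t^b)^q`, `b = 2 - ap > 0` and `q = (2-n)/b < 0`. This function is neither compactly
supported nor, when `b < 1`, Lipschitz near `x₀`, so it is approximated by
`u_{l,R}(x) = φ(clamp d(x₀,x)) - φ(R)`, where `clamp` truncates to `[l, R]`. Each `u_{l,R}` is
Lipschitz and supported in the closed ball of radius `R`
(`clampedProfile_lipschitz`, `clampedProfile_hasCompactSupport`).

The truncation costs nothing on the gradient side: `u_{l,R}` is locally constant off the annulus
`l ≤ d ≤ R`, and on the annulus `|Du_{l,R}| ≤ |φ'(d)|`. Hence `|Du_{l,R}|² ≤ |φ'(d)|²` everywhere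
(`locLip_clampedProfile_le`), and the right-hand side of `(CKN)` is bounded uniformly in `l, R` by
the integral in the claim, since `|φ'(t)|² = (n-2)² (λ + t^b)^{2(ap-n)/b} t^{2-2ap}`.
As `l → 0` and `R → ∞` the functions `u_{l,R}` converge pointwise to `φ(d)`, and Fatou's lemma on
the left-hand side concludes.
-/

open MeasureTheory Filter Topology Metric

/-- Volume of the unit ball in `ℝ^n`. -/
noncomputable def omegaBall (n : ℕ) : ℝ :=
  Real.pi ^ ((n : ℝ) / 2) / Real.Gamma ((n : ℝ) / 2 + 1)

/-- The sharp Caffarelli-Kohn-Nirenberg constant `K_a` (for `p = 2n/(n-2+2a)`). -/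
noncomputable def CKNconst (n : ℕ) (a p : ℝ) : ℝ :=
  (1 / (((n : ℝ) - 2) * ((n : ℝ) - a * p))) ^ ((1 : ℝ) / 2) *
    ((2 - a * p) * Real.Gamma ((2 * (n : ℝ) - 2 * a * p) / (2 - a * p)) /
        ((n : ℝ) * omegaBall n * Real.Gamma (((n : ℝ) - a * p) / (2 - a * p)) ^ 2)) ^
      ((2 - a * p) / (2 * (n : ℝ) - 2 * a * p))

/-- The local Lipschitz constant `|Du|(x) = limsup_{y → x} |u(y)-u(x)| / d(x,y)`. -/
noncomputable def locLip {X : Type*} [MetricSpace X] (u : X → ℝ) (x : X) : ℝ :=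
  Filter.limsup (fun y => |u y - u x| / dist x y) (𝓝[≠] x)

/-- The Caffarelli-Kohn-Nirenberg inequality `(CKN)_C^{x₀}` on a metric measure space:
`(∫_X |u|^p / d(x₀,·)^{ap} dμ)^{1/p} ≤ C (∫_X |Du|² dμ)^{1/2}` for all Lipschitz functions
with compact support. -/
def CKNineq {X : Type*} [MetricSpace X] [MeasurableSpace X]
    (μ : Measure X) (x₀ : X) (a p C : ℝ) : Prop :=
  ∀ u : X → ℝ, (∃ K : NNReal, LipschitzWith K u) → HasCompactSupport u →
    (∫⁻ x, ENNReal.ofReal (|u x| ^ p / dist x₀ x ^ (a * p)) ∂μ) ^ ((1 : ℝ) / p) ≤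
      ENNReal.ofReal C * (∫⁻ x, ENNReal.ofReal (locLip u x ^ 2) ∂μ) ^ ((1 : ℝ) / 2)

/-- The volume condition `(VD)^m_{C₀}`: `μ(B(x,R))/μ(B(x,r)) ≤ C₀ (R/r)^m`
for all `x` and `0 < r < R`. -/
def VDcond {X : Type*} [MetricSpace X] [MeasurableSpace X]
    (μ : Measure X) (m C₀ : ℝ) : Prop :=
  ∀ x : X, ∀ r R : ℝ, 0 < r → r < R →
    μ (ball x R) ≤ ENNReal.ofReal (C₀ * (R / r) ^ m) * μ (ball x r)

/-- The density condition `(AR)^n_{x₀}`: `liminf_{r → 0} μ(B(x₀,r))/(ω_n r^n) = 1`. -/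
def ARcond {X : Type*} [MetricSpace X] [MeasurableSpace X]
    (μ : Measure X) (x₀ : X) (n : ℕ) : Prop :=
  Filter.liminf (fun r : ℝ => (μ (ball x₀ r)).toReal / (omegaBall n * r ^ n)) (𝓝[>] 0) = 1

/-- The radial profile `φ(t) = (λ + t^b)^q`. -/
noncomputable def profile (lam b q t : ℝ) : ℝ := (lam + t ^ b) ^ q

/-- The derivative of `profile` at `t > 0`. -/
noncomputable def profileDeriv (lam b q t : ℝ) : ℝ :=
  b * t ^ (b - 1) * q * (lam + t ^ b) ^ (q - 1)

/-- Truncation of a real number to `[l, R]` (for `l ≤ R`). -/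
noncomputable def clampTo (l R t : ℝ) : ℝ := max l (min t R)

/-- The compactly supported Lipschitz approximation `φ(clamp d(x₀,x)) - φ(R)` of
`φ(d(x₀,x))`. -/
noncomputable def clampedProfile {X : Type*} [MetricSpace X] (x₀ : X) (lam b q l R : ℝ)
    (x : X) : ℝ :=
  profile lam b q (clampTo l R (dist x₀ x)) - profile lam b q R

lemma lipschitz_clampTo (l R : ℝ) : LipschitzWith 1 (clampTo l R) :=
  (LipschitzWith.id.min_const R).const_max l

lemma hasDerivAt_profile {lam b q t : ℝ} (hlam : 0 < lam) (ht : 0 < t) :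
    HasDerivAt (profile lam b q) (profileDeriv lam b q t) t := by
  have hpos : 0 < lam + t ^ b := by positivity
  exact ((Real.hasDerivAt_rpow_const (p := b) (Or.inl ht.ne')).const_add lam).rpow_const
    (Or.inl hpos.ne')

lemma continuousOn_profileDeriv {lam b q l R : ℝ} (hlam : 0 < lam) (hl : 0 < l) :
    ContinuousOn (profileDeriv lam b q) (Set.Icc l R) := by
  intro t ht
  have ht0 : 0 < t := hl.trans_le ht.1
  have hpos : 0 < lam + t ^ b := by positivity
  have h1 : ContinuousAt (fun t : ℝ => t ^ (b - 1)) t :=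
    Real.continuousAt_rpow_const _ _ (Or.inl ht0.ne')
  have h2 : ContinuousAt (fun t : ℝ => lam + t ^ b) t :=
    continuousAt_const.add (Real.continuousAt_rpow_const _ _ (Or.inl ht0.ne'))
  have h3 : ContinuousAt (fun t : ℝ => (lam + t ^ b) ^ (q - 1)) t :=
    h2.rpow_const (Or.inl hpos.ne')
  exact (((continuousAt_const.mul h1).mul continuousAt_const).mul h3).continuousWithinAt

lemma clampTo_mem {l R : ℝ} (hlR : l ≤ R) (t : ℝ) : clampTo l R t ∈ Set.Icc l R :=
  ⟨le_max_left _ _, max_le hlR (min_le_right _ _)⟩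

lemma clampedProfile_lipschitz {X : Type*} [MetricSpace X] (x₀ : X) {lam b q l R : ℝ}
    (hlam : 0 < lam) (hl : 0 < l) (hlR : l ≤ R) :
    ∃ K : NNReal, LipschitzWith K (clampedProfile x₀ lam b q l R) := by
  obtain ⟨M, hM⟩ := isCompact_Icc.exists_bound_of_continuousOn
    (continuousOn_profileDeriv (b := b) (q := q) (R := R) hlam hl)
  have hM0 : 0 ≤ M := (norm_nonneg _).trans (hM l ⟨le_rfl, hlR⟩)
  refine ⟨⟨M, hM0⟩, LipschitzWith.of_dist_le_mul fun x y => ?_⟩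
  have h1 := (convex_Icc l R).norm_image_sub_le_of_norm_hasDerivWithin_le
    (fun t ht => (hasDerivAt_profile (b := b) (q := q) hlam (hl.trans_le ht.1)).hasDerivWithinAt)
    hM (clampTo_mem hlR (dist x₀ y)) (clampTo_mem hlR (dist x₀ x))
  have h2 := (lipschitz_clampTo l R).dist_le_mul (dist x₀ x) (dist x₀ y)
  have h3 : dist (dist x₀ x) (dist x₀ y) ≤ dist x y := by
    rw [Real.dist_eq, dist_comm x₀ x, dist_comm x₀ y]
    exact abs_dist_sub_le x y x₀
  simp only [NNReal.coe_one, one_mul] at h2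
  rw [← dist_eq_norm, ← dist_eq_norm] at h1
  simp only [clampedProfile, dist_sub_right]
  exact h1.trans (mul_le_mul_of_nonneg_left (h2.trans h3) hM0)

lemma clampedProfile_hasCompactSupport {X : Type*} [MetricSpace X] [ProperSpace X] (x₀ : X)
    {lam b q l R : ℝ} (hlR : l ≤ R) :
    HasCompactSupport (clampedProfile x₀ lam b q l R) := by
  refine HasCompactSupport.intro (isCompact_closedBall x₀ R) fun x hx => ?_
  rw [mem_closedBall, not_le, dist_comm] at hx
  simp [clampedProfile, clampTo, min_eq_right hx.le, max_eq_right hlR]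

lemma locLip_nonneg {X : Type*} [MetricSpace X] (u : X → ℝ) (x : X) : 0 ≤ locLip u x := by
  rw [locLip, Filter.limsup_eq]
  rcases (𝓝[≠] x).eq_or_neBot with h | h
  · simp [h]
  · refine Real.sInf_nonneg fun c hc => ?_
    obtain ⟨y, hy⟩ := (show ∀ᶠ y in 𝓝[≠] x, |u y - u x| / dist x y ≤ c from hc).exists
    exact le_trans (by positivity) hy

/-- At an isolated point the limsup in `locLip` runs over the trivial filter and equals `0`, so
the bound holds there as well. -/
lemma locLip_le {X : Type*} [MetricSpace X] {u : X → ℝ} {x : X} {g : ℝ} (hg : 0 ≤ g)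
    (h : ∀ ε > 0, ∀ᶠ y in 𝓝 x, |u y - u x| ≤ (g + ε) * dist x y) : locLip u x ≤ g := by
  refine le_of_forall_pos_le_add fun ε hε => ?_
  rw [locLip, Filter.limsup_eq]
  rcases (𝓝[≠] x).eq_or_neBot with hb | hb
  · simp [hb]; positivity
  · refine csInf_le ⟨0, fun c hc => ?_⟩ ?_
    · obtain ⟨y, hy⟩ := (show ∀ᶠ y in 𝓝[≠] x, |u y - u x| / dist x y ≤ c from hc).exists
      exact le_trans (by positivity) hy
    · filter_upwards [(h ε hε).filter_mono nhdsWithin_le_nhds, self_mem_nhdsWithin] with y hy hne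
      exact (div_le_iff₀ (dist_pos.2 (Ne.symm hne))).2 hy

/-- At `d(x₀,x) = 0` the function `profileDeriv` may take a junk value, but there
`clampedProfile` is locally constant. -/
lemma locLip_clampedProfile_le {X : Type*} [MetricSpace X] (x₀ : X) {lam b q l R : ℝ}
    (hlam : 0 < lam) (hl : 0 < l) (hlR : l ≤ R) (x : X) :
    locLip (clampedProfile x₀ lam b q l R) x ≤ |profileDeriv lam b q (dist x₀ x)| := by
  refine locLip_le (abs_nonneg _) fun ε hε => ?_
  have hd : Tendsto (fun y => dist x₀ y) (𝓝 x) (𝓝 (dist x₀ x)) :=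
    (continuous_const.dist continuous_id).tendsto x
  have hK : 0 ≤ |profileDeriv lam b q (dist x₀ x)| + ε := by positivity
  rcases lt_or_ge (dist x₀ x) l with h1 | h1
  · filter_upwards [hd.eventually_lt_const h1] with y hy
    have e : ∀ z, dist x₀ z < l → clampTo l R (dist x₀ z) = l := fun z hz =>
      max_eq_left ((min_le_left _ _).trans hz.le)
    simp only [clampedProfile, e y hy, e x h1, sub_self, abs_zero]
    positivity
  rcases lt_or_ge R (dist x₀ x) with h2 | h2
  · filter_upwards [hd.eventually_const_lt h2] with y hy
    have e : ∀ z, R < dist x₀ z → clampTo l R (dist x₀ z) = R := fun z hz => by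
      rw [clampTo, min_eq_right hz.le, max_eq_right hlR]
    simp only [clampedProfile, e y hy, e x h2, sub_self, abs_zero]
    positivity
  have ex : clampTo l R (dist x₀ x) = dist x₀ x := by
    rw [clampTo, min_eq_left h2, max_eq_right h1]
  have hder := (hasDerivAt_profile (b := b) (q := q) hlam (hl.trans_le h1)).isLittleO
  have hc : Tendsto (fun y => clampTo l R (dist x₀ y)) (𝓝 x) (𝓝 (dist x₀ x)) := by
    have := ((lipschitz_clampTo l R).continuous.tendsto (dist x₀ x)).comp hd
    rwa [ex] at this
  filter_upwards [hc.eventually (hder.def hε)] with y hy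
  have h3 : |clampTo l R (dist x₀ y) - dist x₀ x| ≤ dist x y := by
    have h4 := (lipschitz_clampTo l R).dist_le_mul (dist x₀ y) (dist x₀ x)
    rw [ex, NNReal.coe_one, one_mul, Real.dist_eq, Real.dist_eq] at h4
    refine h4.trans ?_
    rw [dist_comm x₀ x, dist_comm x₀ y, dist_comm x y]
    exact abs_dist_sub_le y x x₀
  simp only [clampedProfile, ex, sub_sub_sub_cancel_right]
  set s := clampTo l R (dist x₀ y)
  set t := dist x₀ x
  refine le_trans ?_ (mul_le_mul_of_nonneg_left h3 hK)
  simp only [Real.norm_eq_abs, smul_eq_mul] at hy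
  have h5 := abs_add_le (profile lam b q s - profile lam b q t - (s - t) * profileDeriv lam b q t)
    ((s - t) * profileDeriv lam b q t)
  rw [sub_add_cancel, abs_mul] at h5
  linarith

lemma tendsto_profile_atTop {lam b q : ℝ} (hb : 0 < b) (hq : q < 0) :
    Tendsto (profile lam b q) atTop (𝓝 0) := by
  have h1 : Tendsto (fun t : ℝ => lam + t ^ b) atTop atTop :=
    tendsto_atTop_add_const_left _ _ (tendsto_rpow_atTop hb)
  have h2 := (tendsto_rpow_neg_atTop (neg_pos.2 hq)).comp h1
  rw [neg_neg] at h2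
  exact h2

lemma continuousAt_profile {lam b q t : ℝ} (hlam : 0 < lam) (hb : 0 < b) (ht : 0 ≤ t) :
    ContinuousAt (profile lam b q) t := by
  have hpos : 0 < lam + t ^ b := by positivity
  exact (continuousAt_const.add (Real.continuousAt_rpow_const _ _ (Or.inr hb.le))).rpow_const
    (Or.inl hpos.ne')

lemma tendsto_clampedProfile {X : Type*} [MetricSpace X] (x₀ : X) {lam b q : ℝ}
    (hlam : 0 < lam) (hb : 0 < b) (hq : q < 0) (x : X) :
    Tendsto (fun k : ℕ => clampedProfile x₀ lam b q (1 / ((k : ℝ) + 1)) ((k : ℝ) + 1) x) atTop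
      (𝓝 (profile lam b q (dist x₀ x))) := by
  have hR : Tendsto (fun k : ℕ => (k : ℝ) + 1) atTop atTop :=
    tendsto_atTop_add_const_right _ _ tendsto_natCast_atTop_atTop
  have hmin : Tendsto (fun k : ℕ => min (dist x₀ x) ((k : ℝ) + 1)) atTop (𝓝 (dist x₀ x)) := by
    refine tendsto_const_nhds.congr' ?_
    filter_upwards [hR.eventually_ge_atTop (dist x₀ x)] with k hk
    exact (min_eq_left hk).symm
  have hc : Tendsto (fun k : ℕ => clampTo (1 / ((k : ℝ) + 1)) ((k : ℝ) + 1) (dist x₀ x)) atTop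
      (𝓝 (dist x₀ x)) := by
    have := (tendsto_one_div_add_atTop_nhds_zero_nat (𝕜 := ℝ)).max hmin
    rwa [max_eq_right dist_nonneg] at this
  have h := ((continuousAt_profile (q := q) hlam hb (dist_nonneg (x := x₀) (y := x))).tendsto.comp
    hc).sub ((tendsto_profile_atTop (lam := lam) hb hq).comp hR)
  simpa [clampedProfile, Function.comp_def] using h

/-- under `(CKN)_C^{x₀}`, `(VD)^n_{C₀}` and `(AR)^n_{x₀}` on a proper metric
measure space, the functions `ũ_λ(x) = (λ + d(x₀,x)^{2-ap})^{(2-n)/(2-ap)}` satisfy the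
corresponding integral inequality. -/
theorem ckn_applied_to_extremal {X : Type*} [MetricSpace X] [ProperSpace X]
    [MeasurableSpace X] [BorelSpace X] (μ : Measure X)
    (hvol : ∀ U : Set X, IsOpen U → U.Nonempty → Bornology.IsBounded U → 0 < μ U ∧ μ U < ⊤)
    (n : ℕ) (hn : 3 ≤ n) (a p : ℝ) (ha0 : 0 ≤ a) (ha1 : a < 1)
    (hp : p = 2 * n / (n - 2 + 2 * a))
    (x₀ : X) (C C₀ : ℝ) (hC : 0 < C) (hC₀ : 1 ≤ C₀)
    (hCKN : CKNineq μ x₀ a p C) (hVD : VDcond μ n C₀) (hAR : ARcond μ x₀ n) :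
    ∀ lam : ℝ, 0 < lam →
      (∫⁻ x, ENNReal.ofReal
            ((lam + dist x₀ x ^ (2 - a * p)) ^ ((2 - (n : ℝ)) * p / (2 - a * p)) *
              dist x₀ x ^ (-(a * p))) ∂μ) ^ ((2 : ℝ) / p) ≤
        ENNReal.ofReal (C ^ 2 * ((n : ℝ) - 2) ^ 2) *
          ∫⁻ x, ENNReal.ofReal
            ((lam + dist x₀ x ^ (2 - a * p)) ^ (2 * (a * p - (n : ℝ)) / (2 - a * p)) *
              dist x₀ x ^ (2 - 2 * a * p)) ∂μ := by
  intro lam hlam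
  have hn' : (3 : ℝ) ≤ n := by exact_mod_cast hn
  have hden : 0 < (n : ℝ) - 2 + 2 * a := by linarith
  have hp0 : 0 < p := by rw [hp]; positivity
  obtain ⟨b, hb⟩ : ∃ b, b = 2 - a * p := ⟨_, rfl⟩
  have hb0 : 0 < b := by
    have : b = 2 * ((n : ℝ) - 2) * (1 - a) / (n - 2 + 2 * a) := by
      rw [hb, hp]; field_simp; ring
    rw [this]
    have h1 : 0 < (n : ℝ) - 2 := by linarith
    have h2 : 0 < 1 - a := by linarith
    positivity
  obtain ⟨q, hq⟩ : ∃ q, q = (2 - (n : ℝ)) / b := ⟨_, rfl⟩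
  have hq0 : q < 0 := by rw [hq]; exact div_neg_of_neg_of_pos (by linarith) hb0
  have hbq : b * q = 2 - n := by rw [hq]; field_simp
  set I := ∫⁻ x, ENNReal.ofReal
            ((lam + dist x₀ x ^ (2 - a * p)) ^ (2 * (a * p - (n : ℝ)) / (2 - a * p)) *
              dist x₀ x ^ (2 - 2 * a * p)) ∂μ with hI
  set f : ℕ → X → ENNReal := fun k x => ENNReal.ofReal
    (|clampedProfile x₀ lam b q (1 / ((k : ℝ) + 1)) ((k : ℝ) + 1) x| ^ p / dist x₀ x ^ (a * p))
    with hf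
  have hl : ∀ k : ℕ, 0 < 1 / ((k : ℝ) + 1) := fun k => by positivity
  have hlR : ∀ k : ℕ, 1 / ((k : ℝ) + 1) ≤ (k : ℝ) + 1 := fun k => by
    have hk : (0 : ℝ) ≤ k := k.cast_nonneg
    rw [div_le_iff₀ (by positivity)]; nlinarith
  have hgrad : ∀ k : ℕ, ∫⁻ x, ENNReal.ofReal
      (locLip (clampedProfile x₀ lam b q (1 / ((k : ℝ) + 1)) ((k : ℝ) + 1)) x ^ 2) ∂μ ≤
      ENNReal.ofReal (((n : ℝ) - 2) ^ 2) * I := by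
    intro k
    rw [hI, ← lintegral_const_mul' _ _ ENNReal.ofReal_ne_top]
    refine lintegral_mono fun x => ?_
    rw [← ENNReal.ofReal_mul (sq_nonneg _)]
    have h1 := pow_le_pow_left₀ (locLip_nonneg _ x)
      (locLip_clampedProfile_le (b := b) (q := q) x₀ hlam (hl k) (hlR k) x) 2
    refine ENNReal.ofReal_le_ofReal (h1.trans_eq ?_)
    have hd : 0 ≤ dist x₀ x := dist_nonneg
    have hpos : 0 ≤ lam + dist x₀ x ^ b := by positivity
    have e1 : (2 * (a * p - (n : ℝ)) / (2 - a * p)) = (q - 1) * (2 : ℕ) := by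
      rw [← hb, hq]; field_simp; push_cast; rw [hb]; ring
    have e2 : 2 - 2 * a * p = (b - 1) * (2 : ℕ) := by rw [hb]; push_cast; ring
    rw [sq_abs, e1, e2, ← hb, Real.rpow_mul hpos, Real.rpow_mul hd, Real.rpow_natCast,
      Real.rpow_natCast, profileDeriv]
    calc _ = (b * q) ^ 2 * (((lam + dist x₀ x ^ b) ^ (q - 1)) ^ 2 *
          (dist x₀ x ^ (b - 1)) ^ 2) := by ring
      _ = _ := by rw [hbq]; ring
  have hbound : ∀ k : ℕ, ∫⁻ x, f k x ∂μ ≤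
      (ENNReal.ofReal C * (ENNReal.ofReal (((n : ℝ) - 2) ^ 2) * I) ^ ((1 : ℝ) / 2)) ^ p := by
    intro k
    have h := hCKN _ (clampedProfile_lipschitz (b := b) (q := q) x₀ hlam (hl k) (hlR k))
      (clampedProfile_hasCompactSupport (lam := lam) (b := b) (q := q) x₀ (hlR k))
    have h2 : (∫⁻ x, f k x ∂μ) ^ ((1 : ℝ) / p) ≤
        ENNReal.ofReal C * (ENNReal.ofReal (((n : ℝ) - 2) ^ 2) * I) ^ ((1 : ℝ) / 2) := by
      refine h.trans ?_
      gcongr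
      exact hgrad k
    rw [one_div] at h2
    exact (ENNReal.rpow_inv_le_iff hp0).1 h2
  have hmeas : ∀ k, Measurable (f k) := by
    intro k
    obtain ⟨K, hK⟩ := clampedProfile_lipschitz (b := b) (q := q) x₀ hlam (hl k) (hlR k)
    have h1 := hK.continuous.measurable
    have h2 : Measurable fun x => dist x₀ x := (continuous_const.dist continuous_id).measurable
    exact (((h1.abs).pow_const p).div (h2.pow_const (a * p))).ennreal_ofReal
  have hlim : ∀ x, Tendsto (fun k => f k x) atTop (𝓝 (ENNReal.ofReal
      ((lam + dist x₀ x ^ (2 - a * p)) ^ ((2 - (n : ℝ)) * p / (2 - a * p)) *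
        dist x₀ x ^ (-(a * p))))) := by
    intro x
    have hd : 0 ≤ dist x₀ x := dist_nonneg
    have hpos : 0 ≤ lam + dist x₀ x ^ b := by positivity
    have e : (lam + dist x₀ x ^ (2 - a * p)) ^ ((2 - (n : ℝ)) * p / (2 - a * p)) *
        dist x₀ x ^ (-(a * p)) = |profile lam b q (dist x₀ x)| ^ p / dist x₀ x ^ (a * p) := by
      rw [Real.rpow_neg hd, ← div_eq_mul_inv, profile, abs_of_nonneg (by positivity),
        ← Real.rpow_mul hpos, ← hb, hq]
      congr 2
      ring
    rw [e]
    exact (ENNReal.continuous_ofReal.tendsto _).comp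
      ((((tendsto_clampedProfile x₀ hlam hb0 hq0 x).abs).rpow_const (Or.inr hp0.le)).div_const _)
  have hfatou : ∫⁻ x, liminf (fun k => f k x) atTop ∂μ ≤
      (ENNReal.ofReal C * (ENNReal.ofReal (((n : ℝ) - 2) ^ 2) * I) ^ ((1 : ℝ) / 2)) ^ p := by
    refine (lintegral_liminf_le (μ := μ) hmeas).trans ?_
    exact (liminf_le_liminf (Eventually.of_forall hbound)).trans_eq (liminf_const _)
  simp only [fun x => (hlim x).liminf_eq] at hfatou
  calc _ ≤ ((ENNReal.ofReal C *
        (ENNReal.ofReal (((n : ℝ) - 2) ^ 2) * I) ^ ((1 : ℝ) / 2)) ^ p) ^ ((2 : ℝ) / p) := by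
        gcongr
    _ = ENNReal.ofReal (C ^ 2 * ((n : ℝ) - 2) ^ 2) * I := by
        rw [← ENNReal.rpow_mul, mul_div_cancel₀ _ hp0.ne',
          ENNReal.mul_rpow_of_nonneg _ _ zero_le_two, ← ENNReal.rpow_mul,
          ENNReal.ofReal_mul (sq_nonneg C), ENNReal.ofReal_pow hC.le]
        norm_num [mul_assoc]
end

section
/- Let (X,d) be a proper metric space and μ a Borel measure on X with 0 < μ(U) < ∞ for every nonempty bounded open set U ⊆ X. Let x₀ ∈ X, C ≥ K_a, C₀ ≥ 1, and assume (CKN)_C^{x₀}, (VD)^n_{C₀} and (AR)^n_{x₀} hold. Define Q̃(λ) = ((1-a)/(n-1+a))·∫_X (λ+d(x₀,x)^{2-ap})^{(n-1+a)/(a-1)}·d(x₀,x)^{-ap} dμ(x) and Q_E(λ) = ((1-a)/(n-1+a))·∫_{ℝ^n} (λ+|x|^{2-ap})^{(n-1+a)/(a-1)}·|x|^{-ap} dx. Then Q̃(λ) ≥ (K_a/C)^{n/(1-a)}·Q_E(λ) for every λ > 0. -/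
/-!
Put `s = 2 - ap` and `k = (n - 2) / s`, so that `n/(1-a) = kp = 2k + 2` and
`(n-1+a)/(a-1) = -(2k+1)`. Write `d = d(x₀,·)` and
`G(λ) = ∫ (λ + d^s)^(-(2k+1)) d^(-ap) dμ`, `I(λ) = ∫ (λ + d^s)^(-(2k+2)) d^(-ap) dμ`. Up to the
factor `(1-a)/(n-1+a)`, `Q̃` is `G` and `Q_E` is the same integral over `ℝ^n`, and
`G' = -(2k+1) I` (`hasDerivAt_bub_integral`).

The bubbles `u = (λ + d^s)^(-k)`, which are the Euclidean extremals, satisfy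
`|u|^p d^(-ap) = (λ + d^s)^(-(2k+2)) d^(-ap)` and
`|Du|² ≤ (sk)² d^s (λ + d^s)^(-(2k+2)) d^(-ap)`. Inserting (truncations of) them in the
Caffarelli-Kohn-Nirenberg inequality (`bubble_ckn`) gives the differential inequality
`I^(k/(k+1)) ≤ (C s k)² (G - λ I)` (`bub_differential_ineq`). The integrals are finite because the
volume conditions imply `μ(B(x₀,R)) ≤ 2 C₀ ω_n R^n` (`measure_ball_le`, `integrable_bub`).

On `ℝ^n` the function `G` equals `E λ^(-k)` with an explicit Beta integral `E` (`bub_euclid`), and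
`K_a` is the constant for which it solves the equation corresponding to the inequality; for a
general `C` the solution is `(K_a/C)^(2k+2) E λ^(-k)`, and a factor `θ < 1` makes it a strict
subsolution (`sharp_constant_strict`). The density condition at `x₀` gives
`G(λ) ≥ θ E λ^(-k)` for small `λ` (`near_zero`), which is at least the subsolution since
`K_a ≤ C`. The comparison principle `ode_comparison` propagates the bound to all `λ > 0`, and
`θ → 1` concludes.
-/

open MeasureTheory Filter Topology Metric

/-- The auxiliary function `Q_E(λ)` built from the Euclidean extremals. -/
noncomputable def QE (n : ℕ) (a p lam : ℝ) : ℝ :=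
  ((1 - a) / ((n : ℝ) - 1 + a)) *
    ∫ x : EuclideanSpace ℝ (Fin n),
      (lam + ‖x‖ ^ (2 - a * p)) ^ (((n : ℝ) - 1 + a) / (a - 1)) * ‖x‖ ^ (-(a * p))

/-- The auxiliary function `Q̃(λ)` on a metric measure space `(X,d,μ)` with base point `x₀`. -/
noncomputable def Qtilde {X : Type*} [MetricSpace X] [MeasurableSpace X]
    (μ : Measure X) (x₀ : X) (n : ℕ) (a p lam : ℝ) : ENNReal :=
  ENNReal.ofReal ((1 - a) / ((n : ℝ) - 1 + a)) *
    ∫⁻ x, ENNReal.ofReal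
      ((lam + dist x₀ x ^ (2 - a * p)) ^ (((n : ℝ) - 1 + a) / (a - 1)) *
        dist x₀ x ^ (-(a * p))) ∂μ

section

open Set

/-! ### The Euclidean integral -/

theorem lintegral_gamma {a r : ℝ} (ha : 0 < a) (hr : 0 < r) :
    ∫⁻ t in Ioi (0:ℝ), ENNReal.ofReal (t ^ (a - 1) * Real.exp (-(r * t))) =
      ENNReal.ofReal ((1 / r) ^ a * Real.Gamma a) := by
  have h := Real.integral_rpow_mul_exp_neg_mul_Ioi ha hr
  have hpos : 0 < (1 / r) ^ a * Real.Gamma a :=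
    mul_pos (Real.rpow_pos_of_pos (by positivity) _) (Real.Gamma_pos_of_pos ha)
  rw [← h, ofReal_integral_eq_lintegral_ofReal]
  · exact Integrable.of_integral_ne_zero (by rw [h]; exact hpos.ne')
  · filter_upwards [ae_restrict_mem measurableSet_Ioi] with t ht
    have : (0:ℝ) < t := ht
    simp only [Pi.zero_apply]; positivity

/-- The Beta integral of the second kind, obtained from the Gamma integral by writing
`Γ(b) (λ + t)^(-b) = ∫ x^(b-1) exp(-(λ + t) x) dx` and exchanging the integrals. -/
theorem lintegral_beta {α b lam : ℝ} (hα : 0 < α) (hb : α < b) (hl : 0 < lam) :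
    ∫⁻ t in Ioi (0:ℝ), ENNReal.ofReal (t ^ (α - 1) * (lam + t) ^ (-b)) =
      ENNReal.ofReal (lam ^ (α - b) * (Real.Gamma α * Real.Gamma (b - α) / Real.Gamma b)) := by
  have hb0 : 0 < b := hα.trans hb
  have hG := Real.Gamma_pos_of_pos hb0
  have hGa := Real.Gamma_pos_of_pos hα
  have h1 : ∀ t ∈ Ioi (0:ℝ), ENNReal.ofReal (t ^ (α - 1) * (lam + t) ^ (-b)) =
      ∫⁻ x in Ioi (0:ℝ), ENNReal.ofReal ((1 / Real.Gamma b) * (t ^ (α - 1) *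
        (x ^ (b - 1) * Real.exp (-((lam + t) * x))))) := by
    intro t ht
    have ht : 0 < t := ht
    have : ∀ x : ℝ, ENNReal.ofReal ((1 / Real.Gamma b) * (t ^ (α - 1) *
        (x ^ (b - 1) * Real.exp (-((lam + t) * x))))) =
        ENNReal.ofReal ((1 / Real.Gamma b) * t ^ (α - 1)) *
          ENNReal.ofReal (x ^ (b - 1) * Real.exp (-((lam + t) * x))) := by
      intro x
      rw [← ENNReal.ofReal_mul (by positivity), mul_assoc]
    simp_rw [this]
    rw [lintegral_const_mul _ (by fun_prop), lintegral_gamma hb0 (by positivity),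
      ← ENNReal.ofReal_mul (by positivity)]
    congr 1
    rw [one_div, one_div, Real.inv_rpow (by positivity), ← Real.rpow_neg (by positivity)]
    field_simp
  rw [setLIntegral_congr_fun measurableSet_Ioi h1, lintegral_lintegral_swap]
  · have h2 : ∀ x ∈ Ioi (0:ℝ), ∫⁻ t in Ioi (0:ℝ), ENNReal.ofReal ((1 / Real.Gamma b) * (t ^ (α - 1) *
        (x ^ (b - 1) * Real.exp (-((lam + t) * x))))) =
        ENNReal.ofReal (Real.Gamma α / Real.Gamma b) *
          ENNReal.ofReal (x ^ ((b - α) - 1) * Real.exp (-(lam * x))) := by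
      intro x hx
      have hx : 0 < x := hx
      have : ∀ t : ℝ, ENNReal.ofReal ((1 / Real.Gamma b) * (t ^ (α - 1) *
        (x ^ (b - 1) * Real.exp (-((lam + t) * x))))) =
        ENNReal.ofReal ((1 / Real.Gamma b) * (x ^ (b - 1) * Real.exp (-(lam * x)))) *
          ENNReal.ofReal (t ^ (α - 1) * Real.exp (-(x * t))) := by
        intro t
        rw [← ENNReal.ofReal_mul (by positivity)]
        congr 1
        rw [show -((lam + t) * x) = -(lam * x) + -(x * t) by ring, Real.exp_add]
        ring
      simp_rw [this]
      rw [lintegral_const_mul _ (by fun_prop), lintegral_gamma hα hx,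
        ← ENNReal.ofReal_mul (by positivity), ← ENNReal.ofReal_mul (by positivity)]
      congr 1
      rw [show b - α - 1 = (b - 1) + (-α) by ring, Real.rpow_add hx, Real.rpow_neg hx.le, one_div x,
        Real.inv_rpow hx.le]
      field_simp
    rw [setLIntegral_congr_fun measurableSet_Ioi h2, lintegral_const_mul _ (by fun_prop),
      lintegral_gamma (by linarith) hl, ← ENNReal.ofReal_mul (by positivity)]
    congr 1
    rw [one_div, Real.inv_rpow hl.le, ← Real.rpow_neg hl.le, show -(b - α) = α - b by ring]
    field_simp
  · fun_prop

theorem integral_beta {α b lam : ℝ} (hα : 0 < α) (hb : α < b) (hl : 0 < lam) :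
    ∫ t in Ioi (0:ℝ), t ^ (α - 1) * (lam + t) ^ (-b) =
      lam ^ (α - b) * (Real.Gamma α * Real.Gamma (b - α) / Real.Gamma b) := by
  have h1 := Real.Gamma_pos_of_pos hα
  have h2 := Real.Gamma_pos_of_pos (hα.trans hb)
  have h3 := Real.Gamma_pos_of_pos (sub_pos.2 hb)
  rw [integral_eq_lintegral_of_nonneg_ae, lintegral_beta hα hb hl, ENNReal.toReal_ofReal]
  · positivity
  · filter_upwards [ae_restrict_mem measurableSet_Ioi] with t ht
    have : (0:ℝ) < t := ht
    simp only [Pi.zero_apply]; positivity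
  · exact (by fun_prop : Measurable _).aestronglyMeasurable

/-- Polar coordinates and the substitution `t = r ^ s` turn the Euclidean bubble integral into a
Beta integral; `V` is the volume of the unit ball. The relation `n = s * k + 2` makes the powers
of `r` fit. -/
theorem integral_bubble_euclid {n : ℕ} (hn : 3 ≤ n) {s k lam V : ℝ} (hs : 0 < s) (hk : 0 < k)
    (hnk : (n : ℝ) = s * k + 2) (hl : 0 < lam)
    (hV : V = (volume (ball (0 : EuclideanSpace ℝ (Fin n)) 1)).toReal) :
    ∫ x : EuclideanSpace ℝ (Fin n),
      (lam + ‖x‖ ^ s) ^ (-(2 * k + 1)) * ‖x‖ ^ (-(2 - s)) =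
    lam ^ (-k) * (n * V / s * (Real.Gamma (k + 1) * Real.Gamma k / Real.Gamma (2 * k + 1))) := by
  have : NeZero n := ⟨by omega⟩
  rw [integral_fun_norm_addHaar volume
    (fun t : ℝ => (lam + t ^ s) ^ (-(2 * k + 1)) * t ^ (-(2 - s)))]
  have hG_int := integral_beta (α := k + 1) (b := 2 * k + 1) (lam := lam) (by linarith) (by linarith) hl
  rw [← integral_comp_rpow_Ioi_of_pos hs] at hG_int
  have : ∫ y in Ioi (0:ℝ), y ^ (Module.finrank ℝ (EuclideanSpace ℝ (Fin n)) - 1) •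
      ((lam + y ^ s) ^ (-(2 * k + 1)) * y ^ (-(2 - s))) =
      s⁻¹ * (lam ^ (-k) * (Real.Gamma (k + 1) * Real.Gamma k / Real.Gamma (2 * k + 1))) := by
    rw [show k + 1 - (2 * k + 1) = -k by ring, show 2 * k + 1 - (k + 1) = k by ring] at hG_int
    rw [← hG_int, ← integral_const_mul]
    refine setIntegral_congr_fun measurableSet_Ioi ?_
    intro y hy
    have hy : 0 < y := hy
    simp only [smul_eq_mul, finrank_euclideanSpace, Fintype.card_fin]
    have e1 : y ^ (n - 1) = y ^ ((n : ℝ) - 1) := by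
      rw [← Real.rpow_natCast, Nat.cast_sub (by omega), Nat.cast_one]
    rw [e1, ← Real.rpow_mul hy.le]
    have e2 : y ^ ((n : ℝ) - 1) * y ^ (-(2 - s)) = y ^ (s - 1) * y ^ (s * (k + 1 - 1)) := by
      rw [← Real.rpow_add hy, ← Real.rpow_add hy, hnk]; congr 1; ring
    field_simp
    linear_combination e2
  rw [this, finrank_euclideanSpace, Fintype.card_fin, hV, Measure.real]
  simp only [smul_eq_mul, nsmul_eq_mul]
  ring

/-! ### Layer-cake comparison of radial integrals -/

/-- If the sublevel sets of `f` are dominated by those of `g` (up to a factor `c`), then so are the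
integrals of `h ∘ f` and `h ∘ g` for decreasing `h ≥ 0`. The comparison is only required for radii
`ρ` below which `h` is positive, so a cut-off `h` only sees small radii; the passage between `≤`
and `<` in `hcomp` absorbs the unknown behaviour of `h` at the endpoint of a level set. -/
theorem lintegral_radial_le {X Y : Type*} [MeasurableSpace X] [MeasurableSpace Y]
    (μ : Measure X) (ν : Measure Y) {f : X → ℝ} {g : Y → ℝ} (hf : Measurable f)
    (hg : Measurable g) (hf0 : ∀ x, 0 ≤ f x) (hg0 : ∀ y, 0 ≤ g y)
    (hμ0 : μ {x | f x = 0} = 0) (hν0 : ν {y | g y = 0} = 0)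
    {h : ℝ → ℝ} (hh : Measurable h) (hh0 : ∀ t, 0 ≤ t → 0 ≤ h t) (hanti : AntitoneOn h (Ioi 0))
    (hbdd : ∀ y, 0 < y → BddAbove {t | 0 < t ∧ y < h t}) {c : ENNReal} (hc : c ≠ ⊤)
    (hcomp : ∀ ρ, 0 < ρ → (∀ t, 0 < t → t < ρ → 0 < h t) →
      μ {x | f x ≤ ρ} ≤ c * ν {y | g y < ρ}) :
    ∫⁻ x, ENNReal.ofReal (h (f x)) ∂μ ≤ c * ∫⁻ y, ENNReal.ofReal (h (g y)) ∂ν := by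
  rw [lintegral_eq_lintegral_meas_lt μ (ae_of_all _ fun x => hh0 _ (hf0 x))
      (hh.comp hf).aemeasurable,
    lintegral_eq_lintegral_meas_lt ν (ae_of_all _ fun x => hh0 _ (hg0 x))
      (hh.comp hg).aemeasurable, ← lintegral_const_mul' _ _ hc]
  refine setLIntegral_mono' measurableSet_Ioi fun y hy => ?_
  have hy : 0 < y := hy
  rcases Set.eq_empty_or_nonempty {t | 0 < t ∧ y < h t} with hS | hS
  · have : {x | y < h (f x)} ⊆ {x | f x = 0} := by
      intro x hx
      by_contra hne
      have : f x ∈ {t | 0 < t ∧ y < h t} := ⟨lt_of_le_of_ne (hf0 x) (Ne.symm hne), hx⟩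
      rw [hS] at this
      exact this
    rw [measure_mono_null this hμ0]
    exact zero_le
  · set S := {t | 0 < t ∧ y < h t} with hSdef
    set ρ := sSup S with hρ
    have hB := hbdd y hy
    have hρ0 : 0 < ρ := by
      obtain ⟨t, ht⟩ := hS
      exact ht.1.trans_le (le_csSup hB ht)
    have hlow : ∀ t, 0 < t → t < ρ → y < h t := by
      intro t ht htρ
      obtain ⟨t', ht', htt'⟩ := exists_lt_of_lt_csSup hS htρ
      exact ht'.2.trans_le (hanti ht ht'.1 htt'.le)
    calc μ {x | y < h (f x)} ≤ μ {x | f x ≤ ρ} := by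
          refine measure_mono fun x hx => ?_
          rcases (hf0 x).eq_or_lt with h0 | h0
          · exact (h0.symm.trans_lt hρ0).le
          · exact le_csSup hB ⟨h0, hx⟩
      _ ≤ c * ν {x | g x < ρ} := hcomp ρ hρ0 fun t ht htρ => hy.trans (hlow t ht htρ)
      _ ≤ c * ν {x | y < h (g x)} := by
          gcongr c * ?_
          calc ν {x | g x < ρ} ≤ ν ({x | y < h (g x)} ∪ {x | g x = 0}) := by
                refine measure_mono fun x hx => ?_
                rcases (hg0 x).eq_or_lt with h0 | h0
                · exact Or.inr h0.symm
                · exact Or.inl (hlow _ h0 hx)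
            _ ≤ ν {x | y < h (g x)} + ν {x | g x = 0} := measure_union_le _ _
            _ = _ := by rw [hν0, add_zero]

/-! ### The inequality for the bubbles -/

/-- The squared local Lipschitz constant is at most `L ^ 2` as soon as `u` is locally
`(L + η)`-Lipschitz at `x` for all `η > 0`. Isolated points are included: there the limit superior
along the bottom filter is `sInf univ = 0`. -/
theorem locLip_sq_le {X : Type*} [MetricSpace X] {u : X → ℝ} {x : X} {L : ℝ}
    (h : ∀ η > 0, ∀ᶠ y in 𝓝 x, |u y - u x| ≤ (L + η) * dist x y) : locLip u x ^ 2 ≤ L ^ 2 := by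
  unfold locLip
  rcases eq_or_neBot (𝓝[≠] x) with hb | hb
  · rw [hb]
    have : limsup (fun y => |u y - u x| / dist x y) (⊥ : Filter X) = 0 := by
      simp [limsup_eq]
    rw [this, zero_pow two_ne_zero]; positivity
  · have h0 : 0 ≤ limsup (fun y => |u y - u x| / dist x y) (𝓝[≠] x) := by
      rw [limsup_eq]
      refine Real.sInf_nonneg fun b hb => ?_
      have hb : ∀ᶠ y in 𝓝[≠] x, |u y - u x| / dist x y ≤ b := hb
      obtain ⟨y, hy⟩ := hb.exists
      exact le_trans (by positivity) hy
    refine pow_le_pow_left₀ h0 ?_ 2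
    refine le_of_forall_pos_le_add fun η hη => ?_
    refine limsup_le_of_le ?_ ?_
    · exact IsBoundedUnder.isCoboundedUnder_le ⟨0, eventually_map.2 (.of_forall fun y => by positivity)⟩
    · filter_upwards [(h η hη).filter_mono nhdsWithin_le_nhds, self_mem_nhdsWithin] with y hy hne
      have : 0 < dist x y := dist_pos.2 (Ne.symm hne)
      rwa [div_le_iff₀ this]

theorem hasDerivAt_profile_s13 {s k lam t : ℝ} (hl : 0 < lam) (ht : 0 < t) :
    HasDerivAt (fun t : ℝ => (lam + t ^ s) ^ (-k))
      (-(s * k * ((lam + t ^ s) ^ (-k - 1) * t ^ (s - 1)))) t := by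
  have h1 : HasDerivAt (fun t : ℝ => lam + t ^ s) (s * t ^ (s - 1)) t :=
    (Real.hasDerivAt_rpow_const (Or.inl ht.ne')).const_add lam
  have hpos : 0 < lam + t ^ s := by positivity
  convert h1.rpow_const (p := -k) (Or.inl hpos.ne') using 1
  ring

/-- The inequality `(CKN)` for the bubble `u = (λ + d ^ s) ^ (-k)`, which is not compactly
supported and possibly not Lipschitz at `x₀`. It is applied to the truncations obtained by clamping
`d` to `[ε, R]` and subtracting the value at `R`, and Fatou's lemma gives the limit. -/
theorem bubble_ckn {X : Type*} [MetricSpace X] [ProperSpace X] [MeasurableSpace X] [BorelSpace X]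
    (μ : Measure X) (x₀ : X) {a p C s k lam : ℝ} (hCKN : CKNineq μ x₀ a p C)
    (hs : 0 < s) (hk : 0 < k) (hl : 0 < lam) (hap : a * p = 2 - s) (hkp : k * p = 2 * k + 2)
    (hp : 0 < p) :
    (∫⁻ x, ENNReal.ofReal ((lam + dist x₀ x ^ s) ^ (-(2 * k + 2)) * dist x₀ x ^ (-(2 - s))) ∂μ)
        ^ (1 / p) ≤
      ENNReal.ofReal C * (∫⁻ x, ENNReal.ofReal ((s * k) ^ 2 * (dist x₀ x ^ s *
        ((lam + dist x₀ x ^ s) ^ (-(2 * k + 2)) * dist x₀ x ^ (-(2 - s))))) ∂μ) ^ ((1 : ℝ) / 2) := by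
  set f : ℝ → ℝ := fun t => (lam + t ^ s) ^ (-k) with hf
  have hfder : ∀ t, 0 < t → HasDerivAt f
      (-(s * k * ((lam + t ^ s) ^ (-k - 1) * t ^ (s - 1)))) t := fun t ht => hasDerivAt_profile_s13 hl ht
  have hfcont : ContinuousOn f (Ici 0) := by
    intro t ht
    have ht : 0 ≤ t := ht
    refine ContinuousAt.continuousWithinAt ?_
    refine ContinuousAt.rpow_const ?_ (Or.inl (by positivity))
    exact continuousAt_const.add (Real.continuousAt_rpow_const _ _ (Or.inr hs.le))
  have hftop : Tendsto f atTop (𝓝 0) := by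
    have h1 : Tendsto (fun t : ℝ => lam + t ^ s) atTop atTop :=
      tendsto_atTop_add_const_left _ _ (tendsto_rpow_atTop hs)
    exact (tendsto_rpow_neg_atTop hk).comp h1
  set B := (∫⁻ x, ENNReal.ofReal ((s * k) ^ 2 * (dist x₀ x ^ s *
        ((lam + dist x₀ x ^ s) ^ (-(2 * k + 2)) * dist x₀ x ^ (-(2 - s))))) ∂μ) with hB
  -- clamping the distance to `[ε, R]` keeps the profile Lipschitz and makes it constant beyond `R`
  let cl : ℝ → ℝ → ℝ → ℝ := fun ε R t => max ε (min t R)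
  have hcl1 : ∀ ε R t t', |cl ε R t - cl ε R t'| ≤ |t - t'| := by
    intro ε R t t'
    exact (abs_max_sub_max_le_abs _ _ _ ).trans (by
      have := abs_min_sub_min_le_max t R t' R
      simpa using this) |> fun h => by simpa [cl, max_comm] using h
  have hclc : ∀ ε R, Continuous (cl ε R) := fun ε R => by fun_prop
  have hclmem : ∀ ε R, ε ≤ R → ∀ t, cl ε R t ∈ Icc ε R := fun ε R h t =>
    ⟨le_max_left _ _, max_le h (min_le_right _ _)⟩
  have hcleq : ∀ ε R t, ε ≤ t → t ≤ R → cl ε R t = t := fun ε R t h1 h2 => by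
    simp only [cl]; rw [min_eq_left h2, max_eq_right h1]
  let u : ℝ → ℝ → X → ℝ := fun ε R x => f (cl ε R (dist x₀ x)) - f R
  have key : ∀ ε R, 0 < ε → ε ≤ R →
      ∫⁻ x, ENNReal.ofReal (|u ε R x| ^ p / dist x₀ x ^ (a * p)) ∂μ ≤
        (ENNReal.ofReal C * B ^ ((1 : ℝ) / 2)) ^ p := by
    intro ε R hε hεR
    have hR : 0 < R := hε.trans_le hεR
    have hLip : ∃ K : NNReal, LipschitzWith K (u ε R) := by
      have hcd : ContDiffOn ℝ 1 f (Icc ε R) := by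
        intro t ht
        have ht0 : 0 < t := hε.trans_le ht.1
        refine ContDiffAt.contDiffWithinAt ?_
        refine ContDiffAt.rpow_const_of_ne ?_ (by positivity)
        exact contDiffAt_const.add (Real.contDiffAt_rpow_const_of_ne ht0.ne')
      obtain ⟨K, hK⟩ := hcd.exists_lipschitzOnWith one_ne_zero (convex_Icc _ _) isCompact_Icc
      refine ⟨K, LipschitzWith.of_dist_le_mul fun x y => ?_⟩
      have h1 := hK.dist_le_mul _ (hclmem ε R hεR (dist x₀ x)) _ (hclmem ε R hεR (dist x₀ y))
      simp only [u, Real.dist_eq] at h1 ⊢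
      rw [sub_sub_sub_cancel_right]
      refine h1.trans (mul_le_mul_of_nonneg_left ?_ K.2)
      refine (hcl1 _ _ _ _).trans ?_
      rw [dist_comm x₀ x, dist_comm x₀ y]
      exact abs_dist_sub_le _ _ _
    have hsupp : HasCompactSupport (u ε R) := by
      refine HasCompactSupport.intro (isCompact_closedBall x₀ R) fun x hx => ?_
      have : R < dist x₀ x := by
        rw [mem_closedBall, dist_comm] at hx; exact not_le.1 hx
      simp only [u, cl]
      rw [min_eq_right this.le, max_eq_right hεR, sub_self]
    have h1 := hCKN _ hLip hsupp
    have hloc : ∀ x, locLip (u ε R) x ^ 2 ≤ (s * k) ^ 2 * (dist x₀ x ^ s *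
        ((lam + dist x₀ x ^ s) ^ (-(2 * k + 2)) * dist x₀ x ^ (-(2 - s)))) := by
      intro x
      have hdc : Tendsto (fun y => dist x₀ y) (𝓝 x) (𝓝 (dist x₀ x)) :=
        (continuous_const.dist continuous_id).continuousAt
      -- off the annulus `ε ≤ d ≤ R` the truncation is locally constant
      have hflat : (∀ᶠ t in 𝓝 (dist x₀ x), cl ε R t = cl ε R (dist x₀ x)) →
          locLip (u ε R) x ^ 2 ≤ (s * k) ^ 2 * (dist x₀ x ^ s *
        ((lam + dist x₀ x ^ s) ^ (-(2 * k + 2)) * dist x₀ x ^ (-(2 - s)))) := by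
        intro hev
        refine (locLip_sq_le (L := 0) ?_).trans (by simp; positivity)
        intro η hη
        filter_upwards [hdc.eventually hev] with y hy
        simp only [u]
        rw [hy, sub_self, abs_zero]; positivity
      rcases lt_or_ge (dist x₀ x) ε with hlt | hge
      · refine hflat ?_
        filter_upwards [gt_mem_nhds hlt] with t ht
        simp only [cl]
        rw [max_eq_left ((min_le_left _ _).trans ht.le), max_eq_left ((min_le_left _ _).trans hlt.le)]
      rcases lt_or_ge R (dist x₀ x) with hgt | hle
      · refine hflat ?_
        filter_upwards [lt_mem_nhds hgt] with t ht
        simp only [cl]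
        rw [min_eq_right ht.le, min_eq_right hgt.le]
      set d := dist x₀ x with hd
      have hd0 : 0 < d := hε.trans_le hge
      have hpos : 0 < lam + d ^ s := by positivity
      refine (locLip_sq_le (L := s * k * ((lam + d ^ s) ^ (-k - 1) * d ^ (s - 1)))
        ?_).trans (le_of_eq ?_)
      · intro η hη
        have h2 := (hasDerivAt_iff_isLittleO.1 (hfder d hd0)).def hη
        have hcld : cl ε R d = d := hcleq _ _ _ hge hle
        have h3 : Tendsto (fun y => cl ε R (dist x₀ y)) (𝓝 x) (𝓝 d) := by
          have := ((hclc ε R).tendsto d).comp hdc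
          rwa [hcld] at this
        filter_upwards [h3.eventually h2] with y hy
        simp only [u]
        rw [sub_sub_sub_cancel_right, ← hd, hcld]
        set τ := cl ε R (dist x₀ y) with hτ
        have h4 : |τ - d| ≤ dist x y := by
          rw [← hcld, hτ]
          refine (hcl1 _ _ _ _).trans ?_
          rw [hd, dist_comm x₀ x, dist_comm x₀ y, dist_comm x y]
          exact abs_dist_sub_le _ _ _
        set D := s * k * ((lam + d ^ s) ^ (-k - 1) * d ^ (s - 1)) with hD
        have hD0 : 0 ≤ D := by positivity
        simp only [Real.norm_eq_abs, smul_eq_mul] at hy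
        calc |f τ - f d| = |(f τ - f d - (τ - d) * -D) + (τ - d) * -D| := by ring_nf
          _ ≤ |f τ - f d - (τ - d) * -D| + |(τ - d) * -D| := abs_add_le _ _
          _ ≤ η * |τ - d| + |τ - d| * D := by
              rw [abs_mul (τ - d), abs_neg, abs_of_nonneg hD0]; gcongr
          _ = (D + η) * |τ - d| := by ring
          _ ≤ (D + η) * dist x y := by gcongr
      · have e1 : ((lam + d ^ s) ^ (-k - 1)) ^ 2 = (lam + d ^ s) ^ (-(2 * k + 2)) := by
          rw [← Real.rpow_natCast, ← Real.rpow_mul hpos.le]; congr 1; push_cast; ring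
        have e2 : (d ^ (s - 1)) ^ 2 = d ^ s * d ^ (-(2 - s)) := by
          rw [← Real.rpow_natCast, ← Real.rpow_mul hd0.le, ← Real.rpow_add hd0]
          congr 1; push_cast; ring
        rw [mul_pow, mul_pow _ (d ^ (s - 1)), e1, e2]; ring
    have h2 : (∫⁻ x, ENNReal.ofReal (locLip (u ε R) x ^ 2) ∂μ) ≤ B :=
      lintegral_mono fun x => ENNReal.ofReal_le_ofReal (hloc x)
    have h3 := h1.trans (mul_le_mul_right (ENNReal.rpow_le_rpow h2 (by norm_num : (0:ℝ) ≤ 1 / 2))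
      (ENNReal.ofReal C))
    have h4 := ENNReal.rpow_le_rpow h3 hp.le
    rwa [← ENNReal.rpow_mul, one_div_mul_cancel hp.ne', ENNReal.rpow_one] at h4
  -- Fatou along `ε = 1/(j+1)`, `R = j+1`
  have hlim : ∀ x, Tendsto (fun j : ℕ => ENNReal.ofReal
      (|u (1 / ((j : ℝ) + 1)) ((j : ℝ) + 1) x| ^ p / dist x₀ x ^ (a * p))) atTop
      (𝓝 (ENNReal.ofReal ((lam + dist x₀ x ^ s) ^ (-(2 * k + 2)) * dist x₀ x ^ (-(2 - s))))) := by
    intro x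
    set d := dist x₀ x with hd
    have hd0 : 0 ≤ d := dist_nonneg
    have hR : Tendsto (fun j : ℕ => (j : ℝ) + 1) atTop atTop :=
      tendsto_atTop_add_const_right _ _ tendsto_natCast_atTop_atTop
    have hcl : Tendsto (fun j : ℕ => cl (1 / ((j : ℝ) + 1)) ((j : ℝ) + 1) d) atTop (𝓝 d) := by
      have h1 : Tendsto (fun j : ℕ => max (1 / ((j : ℝ) + 1)) d) atTop (𝓝 (max 0 d)) :=
        tendsto_one_div_add_atTop_nhds_zero_nat.max tendsto_const_nhds
      rw [max_eq_right hd0] at h1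
      refine h1.congr' ?_
      filter_upwards [hR.eventually_ge_atTop d] with j hj
      simp only [cl]; rw [min_eq_left hj]
    have hclw : Tendsto (fun j : ℕ => cl (1 / ((j : ℝ) + 1)) ((j : ℝ) + 1) d) atTop (𝓝[Ici 0] d) :=
      tendsto_nhdsWithin_iff.2 ⟨hcl, .of_forall fun j =>
        (by positivity : (0 : ℝ) ≤ 1 / ((j : ℝ) + 1)).trans (le_max_left _ _)⟩
    have h2 : Tendsto (fun j : ℕ => u (1 / ((j : ℝ) + 1)) ((j : ℝ) + 1) x) atTop (𝓝 (f d)) := by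
      have := ((hfcont d hd0).tendsto.comp hclw).sub (hftop.comp hR)
      simpa using this
    have hfd : 0 ≤ f d := by simp only [hf]; positivity
    have h3 := ((h2.abs.rpow_const (p := p) (Or.inr hp.le)).div_const (d ^ (a * p)))
    have e : |f d| ^ p / d ^ (a * p) = (lam + d ^ s) ^ (-(2 * k + 2)) * d ^ (-(2 - s)) := by
      rw [abs_of_nonneg hfd, hap, Real.rpow_neg hd0, div_eq_mul_inv]
      congr 1
      simp only [hf]
      rw [← Real.rpow_mul (by positivity)]; congr 1; linarith
    rw [e] at h3
    exact ENNReal.tendsto_ofReal h3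
  have hmeas : ∀ j : ℕ, Measurable (fun x => ENNReal.ofReal
      (|u (1 / ((j : ℝ) + 1)) ((j : ℝ) + 1) x| ^ p / dist x₀ x ^ (a * p))) := by
    intro j
    have hd : Measurable (fun x => dist x₀ x) := (continuous_const.dist continuous_id).measurable
    have hfm : Measurable f := by simp only [hf]; fun_prop
    have := hfm.comp ((hclc (1 / ((j : ℝ) + 1)) ((j : ℝ) + 1)).measurable.comp hd)
    have h5 : Measurable (u (1 / ((j : ℝ) + 1)) ((j : ℝ) + 1)) := this.sub_const _
    have h6 : Measurable (fun x => |u (1 / ((j : ℝ) + 1)) ((j : ℝ) + 1) x|) := h5.abs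
    exact ((h6.pow_const p).div (hd.pow_const _)).ennreal_ofReal
  have hfatou := lintegral_liminf_le (μ := μ) (u := atTop) hmeas
  simp_rw [fun x => (hlim x).liminf_eq] at hfatou
  have hfin : (∫⁻ x, ENNReal.ofReal ((lam + dist x₀ x ^ s) ^ (-(2 * k + 2)) *
      dist x₀ x ^ (-(2 - s))) ∂μ) ≤ (ENNReal.ofReal C * B ^ ((1 : ℝ) / 2)) ^ p := by
    refine hfatou.trans ?_
    refine (liminf_le_liminf (v := fun _ => (ENNReal.ofReal C * B ^ ((1 : ℝ) / 2)) ^ p)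
      (.of_forall fun j => key _ _ (by positivity) ?_)).trans (liminf_const _).le
    rw [div_le_iff₀ (by positivity)]
    nlinarith [(Nat.cast_nonneg j : (0:ℝ) ≤ j)]
  have := ENNReal.rpow_le_rpow hfin (by positivity : 0 ≤ 1 / p)
  rwa [← ENNReal.rpow_mul, mul_one_div_cancel hp.ne', ENNReal.rpow_one] at this

/-! ### The radial profiles and their integrals as functions of `λ` -/

/-- Radial profile of the integrand of `Q̃` and `Q_E`, as a function of the distance `t`, in the
parameters `s = 2 - a * p` and `k = (n - 2) / s`, for which `(n-1+a)/(a-1) = -(2k+1)`. -/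
noncomputable def bub (s k lam t : ℝ) : ℝ := (lam + t ^ s) ^ (-(2 * k + 1)) * t ^ (-(2 - s))

/-- Radial profile of `|u| ^ p / d ^ (a * p)` for the bubble `u = (λ + d ^ s) ^ (-k)`. Up to the
factor `-(2k+1)` it is the derivative of `bub` in `λ`. -/
noncomputable def bub' (s k lam t : ℝ) : ℝ := (lam + t ^ s) ^ (-(2 * k + 2)) * t ^ (-(2 - s))

theorem bub_nonneg {s k lam t : ℝ} (hl : 0 < lam) (ht : 0 ≤ t) : 0 ≤ bub s k lam t := by
  unfold bub; positivity

theorem bub'_nonneg {s k lam t : ℝ} (hl : 0 < lam) (ht : 0 ≤ t) : 0 ≤ bub' s k lam t := by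
  unfold bub'; positivity

theorem measurable_bub (s k lam : ℝ) : Measurable (bub s k lam) := by
  unfold bub; fun_prop

theorem measurable_bub' (s k lam : ℝ) : Measurable (bub' s k lam) := by
  unfold bub'; fun_prop

theorem bub_eq {s k lam t : ℝ} (hl : 0 < lam) (ht : 0 ≤ t) :
    bub s k lam t = (lam + t ^ s) * bub' s k lam t := by
  have h : 0 < lam + t ^ s := by positivity
  unfold bub bub'
  rw [show -(2 * k + 1) = 1 + -(2 * k + 2) by ring, Real.rpow_add h, Real.rpow_one, mul_assoc]

theorem bub_antitoneOn {s k lam : ℝ} (hs : 0 < s) (hs2 : s ≤ 2) (hk : 0 < k) (hl : 0 < lam) :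
    AntitoneOn (bub s k lam) (Ioi 0) := by
  intro t ht t' ht' htt'
  have ht : 0 < t := ht
  have ht' : 0 < t' := ht'
  unfold bub
  gcongr ?_ * ?_
  · exact Real.rpow_le_rpow_of_nonpos (by positivity) (by gcongr) (by linarith)
  · exact Real.rpow_le_rpow_of_nonpos ht htt' (by linarith)

theorem bub_bdd {s k lam : ℝ} (hs : 0 < s) (hs2 : s ≤ 2) (hk : 0 < k) (y : ℝ)
    (hy : 0 < y) : BddAbove {t | 0 < t ∧ y < bub s k lam t} := by
  have h1 : Tendsto (fun t : ℝ => (lam + t ^ s) ^ (-(2 * k + 1))) atTop (𝓝 0) :=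
    (tendsto_rpow_neg_atTop (by linarith)).comp
      (tendsto_atTop_add_const_left _ _ (tendsto_rpow_atTop hs))
  obtain ⟨T, hT⟩ := eventually_atTop.1 ((h1.eventually (gt_mem_nhds hy)).and
    ((tendsto_atTop_add_const_left _ lam (tendsto_rpow_atTop hs)).eventually_ge_atTop 0))
  refine ⟨max T 1, fun t ht => ?_⟩
  by_contra hlt
  rw [not_le, max_lt_iff] at hlt
  have h2 : t ^ (-(2 - s)) ≤ 1 := Real.rpow_le_one_of_one_le_of_nonpos hlt.2.le (by linarith)
  have h3 := hT t hlt.1.le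
  have h4 : 0 ≤ (lam + t ^ s) ^ (-(2 * k + 1)) := Real.rpow_nonneg h3.2 _
  have := ht.2
  unfold bub at this
  nlinarith [h3.1]

/-- Differentiation of `G(λ) = ∫ bub` under the integral sign; on `λ' > λ/2` the derivative is
dominated by its value at `λ/2`. -/
theorem hasDerivAt_bub_integral {X : Type*} [MeasurableSpace X] (μ : Measure X) {d : X → ℝ}
    (hd : Measurable d) (hd0 : ∀ x, 0 ≤ d x) {s k : ℝ} (hk : 0 < k)
    (hG_int : ∀ lam, 0 < lam → Integrable (fun x => bub s k lam (d x)) μ) {lam : ℝ} (hl : 0 < lam) :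
    Integrable (fun x => bub' s k lam (d x)) μ ∧
    HasDerivAt (fun l => ∫ x, bub s k l (d x) ∂μ)
      (-(2 * k + 1) * ∫ x, bub' s k lam (d x) ∂μ) lam := by
  have hi : ∀ l, 0 < l → Integrable (fun x => bub' s k l (d x)) μ := by
    intro l hl
    refine ((hG_int l hl).const_mul (1 / l)).mono'
      ((measurable_bub' s k l).comp hd).aestronglyMeasurable (ae_of_all _ fun x => ?_)
    have h0 := bub'_nonneg (s := s) (k := k) hl (hd0 x)
    rw [Real.norm_of_nonneg h0, bub_eq hl (hd0 x), one_div, inv_mul_eq_div, le_div_iff₀ hl, mul_comm]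
    have : 0 ≤ d x ^ s := Real.rpow_nonneg (hd0 x) _
    gcongr; linarith
  refine ⟨hi lam hl, ?_⟩
  rw [← integral_const_mul]
  refine (hasDerivAt_integral_of_dominated_loc_of_deriv_le (s := Ioi (lam / 2))
    (F := fun l x => bub s k l (d x)) (F' := fun l x => -(2 * k + 1) * bub' s k l (d x))
    (bound := fun x => (2 * k + 1) * bub' s k (lam / 2) (d x))
    (Ioi_mem_nhds (by linarith)) (.of_forall fun l =>
      ((measurable_bub s k l).comp hd).aestronglyMeasurable) (hG_int lam hl)
    (((measurable_bub' s k lam).comp hd).aestronglyMeasurable.const_mul _) ?_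
    ((hi _ (by linarith)).const_mul _) ?_).2
  · refine ae_of_all _ fun x l hl' => ?_
    have hl' : lam / 2 < l := hl'
    have hl2 : 0 < lam / 2 := by linarith
    have h0 := bub'_nonneg (s := s) (k := k) (hl2.trans hl') (hd0 x)
    have h1 : 0 ≤ d x ^ s := Real.rpow_nonneg (hd0 x) _
    rw [norm_mul, norm_neg, Real.norm_of_nonneg h0, Real.norm_of_nonneg (by linarith)]
    gcongr
    unfold bub'
    have h2 : 0 ≤ d x ^ (-(2 - s)) := Real.rpow_nonneg (hd0 x) _
    gcongr ?_ * _
    exact Real.rpow_le_rpow_of_nonpos (by linarith) (by linarith) (by linarith)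
  · refine ae_of_all _ fun x l hl' => ?_
    have hl' : lam / 2 < l := hl'
    have h1 : 0 ≤ d x ^ s := Real.rpow_nonneg (hd0 x) _
    have h2 := (((hasDerivAt_id l).add_const (d x ^ s)).rpow_const (p := -(2 * k + 1))
      (Or.inl (by simp only [id]; linarith))).mul_const (d x ^ (-(2 - s)))
    unfold bub bub'
    refine h2.congr_deriv ?_
    rw [show -(2 * k + 1) - 1 = -(2 * k + 2) by ring, id]; ring

/-- Comparison principle for `I ^ q ≤ M (G - l I)`, `G' = -(2k+1) I`. The hypothesis `hstrict` says
that `l ↦ b l ^ (-k)` is a strict subsolution; since `I ^ q + M l I` increases with `I`, whenever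
the two functions touch the subsolution has the strictly smaller slope, so it cannot cross `G`. -/
theorem ode_comparison {G I : ℝ → ℝ} {k M b q : ℝ} (hk : 0 < k) (hM : 0 < M) (hb : 0 < b)
    (hq0 : 0 < q) (hq : (k + 1) * q = k)
    (hG : ∀ l, 0 < l → HasDerivAt G (-(2 * k + 1) * I l) l)
    (hineq : ∀ l, 0 < l → I l ^ q ≤ M * (G l - l * I l))
    (hstrict : M * (b - k * b / (2 * k + 1)) < (k * b / (2 * k + 1)) ^ q)
    (hnear : ∀ᶠ l in 𝓝[>] (0 : ℝ), b * l ^ (-k) ≤ G l) :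
    ∀ l, 0 < l → b * l ^ (-k) ≤ G l := by
  intro l₁ hl₁
  obtain ⟨l₀, hle, hl₀⟩ := (hnear.and (Ioo_mem_nhdsGT hl₁)).exists
  have hw : ∀ l, 0 < l → HasDerivAt (fun l : ℝ => b * l ^ (-k)) (b * (-k * l ^ (-k - 1))) l :=
    fun l hl => (Real.hasDerivAt_rpow_const (Or.inl hl.ne')).const_mul b
  have hpos : ∀ l ∈ Icc l₀ l₁, 0 < l := fun l hl => hl₀.1.trans_le hl.1
  refine image_le_of_deriv_right_lt_deriv_boundary' (a := l₀) (b := l₁)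
    (fun l hl => (hw l (hpos l hl)).continuousAt.continuousWithinAt)
    (fun l hl => (hw l (hpos l ⟨hl.1, hl.2.le⟩)).hasDerivWithinAt) hle
    (fun l hl => (hG l (hpos l hl)).continuousAt.continuousWithinAt)
    (fun l hl => (hG l (hpos l ⟨hl.1, hl.2.le⟩)).hasDerivWithinAt) ?_ ⟨hl₀.2.le, le_rfl⟩
  intro l hl heq
  have hl0 : 0 < l := hpos l ⟨hl.1, hl.2.le⟩
  have h1 := hineq l hl0
  rw [← heq] at h1
  -- `-(2k+1) J` is the slope of the subsolution at `l`
  set J := k * b / (2 * k + 1) * l ^ (-k - 1) with hJ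
  have hJ0 : 0 < J := by positivity
  have hJd : b * (-k * l ^ (-k - 1)) = -(2 * k + 1) * J := by
    rw [hJ]; field_simp
  have hlk : l ^ (-k) = l * l ^ (-k - 1) := by
    rw [show -k = 1 + (-k - 1) by ring, Real.rpow_add hl0, Real.rpow_one]
    ring_nf
  have h2 : M * (b * l ^ (-k) - l * J) < J ^ q := by
    have e1 : J ^ q = (k * b / (2 * k + 1)) ^ q * l ^ (-k) := by
      rw [hJ, Real.mul_rpow (by positivity) (by positivity), ← Real.rpow_mul hl0.le]
      congr 2; linarith
    have e2 : M * (b * l ^ (-k) - l * J) = M * (b - k * b / (2 * k + 1)) * l ^ (-k) := by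
      rw [hJ, hlk]; ring
    rw [e1, e2]
    gcongr
  have h3 : I l < J := by
    by_contra hge
    rw [not_lt] at hge
    have h4 : J ^ q ≤ I l ^ q := Real.rpow_le_rpow hJ0.le hge hq0.le
    have h5 : M * (l * J) ≤ M * (l * I l) := by gcongr
    nlinarith
  rw [hJd]
  nlinarith

/-- The choice of `K_a` makes `A = k E / (2k+1)`, scaled by `(K / C) ^ (2k+2)`, an exact solution of
the algebraic relation behind the comparison with constant `C`; a factor `θ < 1` makes it strict. -/
theorem sharp_constant_strict {s k K A C θ : ℝ} (hs : 0 < s) (hk : 0 < k) (hA : 0 < A) (hC : 0 < C)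
    (hθ0 : 0 < θ) (hθ : θ < 1)
    (hK : K = (1 / (s * k * (s * (k + 1)))) ^ ((1 : ℝ) / 2) * (1 / A) ^ (1 / (2 * k + 2))) :
    (C * (s * k)) ^ 2 * ((k + 1) / k * (θ * (K / C) ^ (2 * k + 2) * A)) <
      (θ * (K / C) ^ (2 * k + 2) * A) ^ (k / (k + 1)) := by
  have hK0 : 0 < K := by rw [hK]; positivity
  set β := θ * (K / C) ^ (2 * k + 2) * A with hβ
  have hβ0 : 0 < β := by positivity
  have hK2 : K ^ 2 = 1 / (s * k * (s * (k + 1))) * (1 / A) ^ (1 / (k + 1)) := by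
    rw [hK, mul_pow, ← Real.rpow_natCast, ← Real.rpow_natCast, ← Real.rpow_mul (by positivity),
      ← Real.rpow_mul (by positivity)]
    congr 1
    · norm_num
    · congr 1; push_cast; field_simp
  have h1 : β ^ (1 / (k + 1)) = θ ^ (1 / (k + 1)) * ((K / C) ^ 2 * A ^ (1 / (k + 1))) := by
    rw [hβ, Real.mul_rpow (by positivity) (by positivity),
      Real.mul_rpow (by positivity) (by positivity), ← Real.rpow_mul (by positivity), mul_assoc]
    congr 2
    rw [← Real.rpow_natCast]; congr 1; push_cast; field_simp
  have h2 : (1 / A) ^ (1 / (k + 1)) * A ^ (1 / (k + 1)) = 1 := by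
    rw [← Real.mul_rpow (by positivity) (by positivity), one_div_mul_cancel hA.ne', Real.one_rpow]
  have h3 : θ ^ (1 / (k + 1)) < 1 := Real.rpow_lt_one hθ0.le hθ (by positivity)
  have h4 : (C * (s * k)) ^ 2 * ((k + 1) / k) * β ^ (1 / (k + 1)) = θ ^ (1 / (k + 1)) := by
    rw [h1, div_pow, hK2]
    have : (C * (s * k)) ^ 2 * ((k + 1) / k) * (θ ^ (1 / (k + 1)) *
        (1 / (s * k * (s * (k + 1))) * (1 / A) ^ (1 / (k + 1)) / C ^ 2 * A ^ (1 / (k + 1)))) =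
        θ ^ (1 / (k + 1)) * ((1 / A) ^ (1 / (k + 1)) * A ^ (1 / (k + 1))) := by
      field_simp
    rw [this, h2, mul_one]
  have h5 : β = β ^ (1 / (k + 1)) * β ^ (k / (k + 1)) := by
    rw [← Real.rpow_add hβ0, ← add_div, add_comm, div_self (by positivity), Real.rpow_one]
  calc (C * (s * k)) ^ 2 * ((k + 1) / k * β)
      = (C * (s * k)) ^ 2 * ((k + 1) / k) * β ^ (1 / (k + 1)) * β ^ (k / (k + 1)) := by
        nth_rewrite 1 [h5]; ring
    _ = θ ^ (1 / (k + 1)) * β ^ (k / (k + 1)) := by rw [h4]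
    _ < 1 * β ^ (k / (k + 1)) := by gcongr
    _ = _ := one_mul _

/-! ### Volume growth at the base point and its consequences -/

theorem omegaBall_pos (n : ℕ) : 0 < omegaBall n := by
  unfold omegaBall
  have := Real.Gamma_pos_of_pos (by positivity : (0:ℝ) < (n : ℝ) / 2 + 1)
  positivity

theorem volume_ball_eq {n : ℕ} (hn : 3 ≤ n) {r : ℝ} (hr : 0 ≤ r) :
    volume (ball (0 : EuclideanSpace ℝ (Fin n)) r) = ENNReal.ofReal (omegaBall n * r ^ n) := by
  have : NeZero n := ⟨by omega⟩
  have h : √Real.pi ^ n = Real.pi ^ ((n : ℝ) / 2) := by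
    rw [Real.sqrt_eq_rpow, ← Real.rpow_natCast, ← Real.rpow_mul Real.pi_pos.le]
    congr 1; ring
  rw [EuclideanSpace.volume_ball, Fintype.card_fin, ← ENNReal.ofReal_pow hr,
    ← ENNReal.ofReal_mul (by positivity), h, mul_comm]
  rfl

theorem volume_closedBall_eq {n : ℕ} (hn : 3 ≤ n) {r : ℝ} (hr : 0 ≤ r) :
    volume (closedBall (0 : EuclideanSpace ℝ (Fin n)) r) =
      ENNReal.ofReal (omegaBall n * r ^ n) := by
  have : NeZero n := ⟨by omega⟩
  rw [Measure.addHaar_closedBall_eq_addHaar_ball, volume_ball_eq hn hr]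

/-- The two consequences of `(AR)` that are used. The real-valued `liminf` is a supremum with junk
value `0` for empty or unbounded sets; the value `1` excludes both cases. -/
theorem density_bounds {X : Type*} [MetricSpace X] [MeasurableSpace X] {μ : Measure X} {x₀ : X}
    {n : ℕ} (hAR : ARcond μ x₀ n) :
    (∃ᶠ r in 𝓝[>] (0 : ℝ), (μ (ball x₀ r)).toReal / (omegaBall n * r ^ n) < 2) ∧
    ∀ δ < 1, ∀ᶠ r in 𝓝[>] (0 : ℝ), δ ≤ (μ (ball x₀ r)).toReal / (omegaBall n * r ^ n) := by
  unfold ARcond at hAR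
  rw [liminf_eq] at hAR
  set S := {a : ℝ | ∀ᶠ r in 𝓝[>] (0 : ℝ), a ≤ (μ (ball x₀ r)).toReal / (omegaBall n * r ^ n)}
    with hS
  have hne : S.Nonempty := by
    by_contra h
    rw [not_nonempty_iff_eq_empty.1 h, Real.sSup_empty] at hAR
    exact zero_ne_one hAR
  have hbd : BddAbove S := by
    by_contra h
    rw [Real.sSup_of_not_bddAbove h] at hAR
    exact zero_ne_one hAR
  constructor
  · intro h
    have : (2 : ℝ) ∈ S := by
      filter_upwards [h] with r hr using not_lt.1 hr
    have := le_csSup hbd this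
    linarith
  · intro δ hδ
    rw [← hAR] at hδ
    obtain ⟨b, hb, hδb⟩ := exists_lt_of_lt_csSup hne hδ
    have hb : ∀ᶠ r in 𝓝[>] (0 : ℝ), b ≤ (μ (ball x₀ r)).toReal / (omegaBall n * r ^ n) := hb
    filter_upwards [hb] with r hr using hδb.le.trans hr

/-- `(AR)` bounds the volume of some arbitrarily small balls around `x₀`, and `(VD)` transports this
bound to all radii. -/
theorem measure_ball_le {X : Type*} [MetricSpace X] [MeasurableSpace X] {μ : Measure X} {x₀ : X}
    {n : ℕ} {C₀ : ℝ} (hC₀ : 1 ≤ C₀) (hfin : ∀ r, 0 < r → μ (ball x₀ r) ≠ ⊤)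
    (hVD : VDcond μ n C₀) (hAR : ARcond μ x₀ n) {R : ℝ} (hR : 0 < R) :
    μ (ball x₀ R) ≤ ENNReal.ofReal (2 * C₀ * (omegaBall n * R ^ n)) := by
  obtain ⟨r, hr, hr0, hrR⟩ := ((density_bounds hAR).1.and_eventually (Ioo_mem_nhdsGT hR)).exists
  have hω := omegaBall_pos n
  rw [div_lt_iff₀ (by positivity)] at hr
  calc μ (ball x₀ R) ≤ ENNReal.ofReal (C₀ * (R / r) ^ (n : ℝ)) * μ (ball x₀ r) :=
        hVD x₀ r R hr0 hrR
    _ ≤ ENNReal.ofReal (C₀ * (R / r) ^ (n : ℝ)) * ENNReal.ofReal (2 * (omegaBall n * r ^ n)) := by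
        gcongr
        rw [← ENNReal.ofReal_toReal (hfin r hr0)]
        exact ENNReal.ofReal_le_ofReal hr.le
    _ = _ := by
        rw [← ENNReal.ofReal_mul (by positivity), Real.rpow_natCast, div_pow]
        congr 1
        field_simp

theorem measure_center {X : Type*} [MetricSpace X] [MeasurableSpace X] {μ : Measure X} {x₀ : X}
    {n : ℕ} (hn : 3 ≤ n) {D : ℝ}
    (h : ∀ R, 0 < R → μ (ball x₀ R) ≤ ENNReal.ofReal (D * (omegaBall n * R ^ n))) :
    μ {x | dist x₀ x = 0} = 0 := by
  have hlim : Tendsto (fun R : ℝ => ENNReal.ofReal (D * (omegaBall n * R ^ n))) (𝓝[>] 0) (𝓝 0) := by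
    have : Tendsto (fun R : ℝ => ENNReal.ofReal (D * (omegaBall n * R ^ n))) (𝓝 0)
        (𝓝 (ENNReal.ofReal (D * (omegaBall n * 0 ^ n)))) :=
      (ENNReal.continuous_ofReal.comp
        (by fun_prop : Continuous fun R : ℝ => D * (omegaBall n * R ^ n))).tendsto 0
    rw [zero_pow (by omega), mul_zero, mul_zero, ENNReal.ofReal_zero] at this
    exact this.mono_left nhdsWithin_le_nhds
  refine le_antisymm (ge_of_tendsto hlim ?_) zero_le
  filter_upwards [self_mem_nhdsWithin] with R hR
  have hR : 0 < R := hR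
  refine (measure_mono fun x hx => ?_).trans (h R hR)
  have hx : dist x₀ x = 0 := hx
  rw [mem_ball, dist_comm, hx]; exact hR

theorem volume_center {n : ℕ} (hn : 3 ≤ n) :
    volume {x : EuclideanSpace ℝ (Fin n) | ‖x‖ = 0} = 0 := by
  have : NeZero n := ⟨by omega⟩
  simp

theorem bub_euclid {n : ℕ} (hn : 3 ≤ n) {s k lam : ℝ} (hs : 0 < s) (hk : 0 < k)
    (hnk : (n : ℝ) = s * k + 2) (hl : 0 < lam) :
    ∫ x : EuclideanSpace ℝ (Fin n), bub s k lam ‖x‖ = lam ^ (-k) *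
      (n * omegaBall n / s * (Real.Gamma (k + 1) * Real.Gamma k / Real.Gamma (2 * k + 1))) := by
  refine integral_bubble_euclid hn hs hk hnk hl ?_
  rw [volume_ball_eq hn zero_le_one, one_pow, mul_one,
    ENNReal.toReal_ofReal (omegaBall_pos n).le]

theorem euclid_const_pos {n : ℕ} (hn : 3 ≤ n) {s k : ℝ} (hs : 0 < s) (hk : 0 < k) :
    0 < n * omegaBall n / s * (Real.Gamma (k + 1) * Real.Gamma k / Real.Gamma (2 * k + 1)) := by
  have h1 := Real.Gamma_pos_of_pos (by positivity : 0 < k + 1)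
  have h2 := Real.Gamma_pos_of_pos hk
  have h3 := Real.Gamma_pos_of_pos (by positivity : 0 < 2 * k + 1)
  have h4 := omegaBall_pos n
  have h5 : (0 : ℝ) < n := by exact_mod_cast (by omega : 0 < n)
  positivity

theorem integrable_bub_euclid {n : ℕ} (hn : 3 ≤ n) {s k lam : ℝ} (hs : 0 < s) (hk : 0 < k)
    (hnk : (n : ℝ) = s * k + 2) (hl : 0 < lam) :
    Integrable (fun x : EuclideanSpace ℝ (Fin n) => bub s k lam ‖x‖) := by
  refine Integrable.of_integral_ne_zero ?_
  rw [bub_euclid hn hs hk hnk hl]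
  have := euclid_const_pos hn hs hk
  positivity

/-- Euclidean volume growth of balls around `x₀` suffices, by comparison with the Euclidean
integral. The factor `2 ^ n` bounds closed balls by open ones. -/
theorem integrable_bub {X : Type*} [MetricSpace X] [MeasurableSpace X] [BorelSpace X]
    {μ : Measure X} {x₀ : X} {n : ℕ} (hn : 3 ≤ n) {s k D : ℝ} (hs : 0 < s) (hs2 : s ≤ 2)
    (hk : 0 < k) (hnk : (n : ℝ) = s * k + 2) (hD : 0 ≤ D)
    (h : ∀ R, 0 < R → μ (ball x₀ R) ≤ ENNReal.ofReal (D * (omegaBall n * R ^ n)))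
    {lam : ℝ} (hl : 0 < lam) : Integrable (fun x => bub s k lam (dist x₀ x)) μ := by
  have hd : Measurable (fun x => dist x₀ x) := (continuous_const.dist continuous_id).measurable
  refine ⟨((measurable_bub s k lam).comp hd).aestronglyMeasurable, ?_⟩
  rw [hasFiniteIntegral_iff_ofReal (ae_of_all _ fun x => bub_nonneg hl dist_nonneg)]
  refine lt_of_le_of_lt (lintegral_radial_le μ (volume : Measure (EuclideanSpace ℝ (Fin n)))
    (f := fun x => dist x₀ x) (g := fun y => ‖y‖) hd measurable_norm (fun _ => dist_nonneg)
    (fun _ => norm_nonneg _) (measure_center hn h) (volume_center hn) (measurable_bub s k lam)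
    (fun t ht => bub_nonneg hl ht) (bub_antitoneOn hs hs2 hk hl) (bub_bdd hs hs2 hk)
    (c := ENNReal.ofReal (D * 2 ^ n)) ENNReal.ofReal_ne_top ?_) ?_
  · intro ρ hρ _
    have e : {y : EuclideanSpace ℝ (Fin n) | ‖y‖ < ρ} = ball 0 ρ := by ext; simp
    rw [e, volume_ball_eq hn hρ.le, ← ENNReal.ofReal_mul (by positivity)]
    refine (measure_mono (t := ball x₀ (2 * ρ)) fun x hx => ?_).trans
      ((h (2 * ρ) (by positivity)).trans (le_of_eq ?_))
    · have hx : dist x₀ x ≤ ρ := hx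
      rw [mem_ball, dist_comm]; linarith
    · congr 1; rw [mul_pow]; ring
  · refine ENNReal.mul_lt_top ENNReal.ofReal_lt_top ?_
    have := (integrable_bub_euclid hn hs hk hnk hl).2
    rwa [hasFiniteIntegral_iff_ofReal (ae_of_all _ fun x => bub_nonneg hl (norm_nonneg _))] at this

/-- As `l → 0` the bubbles concentrate at `x₀`, where by `(AR)` the measure has density at least `δ`
for any `δ < 1`: the part of the Euclidean integral inside a small ball is at most `δ⁻¹` times the
integral over `X`, and the part outside stays bounded while the total `E l ^ (-k)` blows up. -/
theorem near_zero {X : Type*} [MetricSpace X] [MeasurableSpace X] [BorelSpace X]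
    {μ : Measure X} {x₀ : X} {n : ℕ} (hn : 3 ≤ n) {s k : ℝ} (hs : 0 < s) (hs2 : s ≤ 2)
    (hk : 0 < k) (hnk : (n : ℝ) = s * k + 2) (hfin : ∀ r, 0 < r → μ (ball x₀ r) ≠ ⊤)
    (hAR : ARcond μ x₀ n) (h0 : μ {x | dist x₀ x = 0} = 0)
    (hG_int : ∀ lam, 0 < lam → Integrable (fun x => bub s k lam (dist x₀ x)) μ)
    {E : ℝ} (hE0 : 0 < E)
    (hE : ∀ lam, 0 < lam → ∫ x : EuclideanSpace ℝ (Fin n), bub s k lam ‖x‖ = lam ^ (-k) * E)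
    {θ : ℝ} (hθ0 : 0 < θ) (hθ : θ < 1) :
    ∀ᶠ l in 𝓝[>] (0 : ℝ), θ * E * l ^ (-k) ≤ ∫ x, bub s k l (dist x₀ x) ∂μ := by
  have hd : Measurable (fun x => dist x₀ x) := (continuous_const.dist continuous_id).measurable
  have hω := omegaBall_pos n
  obtain ⟨δ, hδ1, hδ2⟩ := exists_between hθ
  have hδ0 : 0 < δ := hθ0.trans hδ1
  obtain ⟨r, hr0, hr⟩ := mem_nhdsGT_iff_exists_Ioc_subset.1 ((density_bounds hAR).2 δ hδ2)
  have hr0 : 0 < r := hr0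
  -- `T` bounds the Euclidean integral over `‖x‖ ≥ r` uniformly in `l`
  set A := 1 + 1 / r ^ s with hA
  have hA0 : 0 < A := by positivity
  set T := A ^ (2 * k + 1) * E with hT
  have hT0 : 0 < T := by positivity
  have hmain : ∀ l, 0 < l → l ^ (-k) * E ≤ δ⁻¹ * (∫ x, bub s k l (dist x₀ x) ∂μ) + T := by
    intro l hl
    let h : ℝ → ℝ := fun t => if t < r then bub s k l t else 0
    have hh0 : ∀ t, 0 ≤ t → 0 ≤ h t := by
      intro t ht; simp only [h]; split_ifs
      · exact bub_nonneg hl ht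
      · exact le_rfl
    have hhm : Measurable h := (measurable_bub s k l).ite measurableSet_Iio measurable_const
    have hle : ∀ t, 0 ≤ t → h t ≤ bub s k l t := by
      intro t ht; simp only [h]; split_ifs
      · exact le_rfl
      · exact bub_nonneg hl ht
    have hanti : AntitoneOn h (Ioi 0) := by
      intro t ht t' ht' htt'
      simp only [h]
      split_ifs with h1 h2 h2
      · exact bub_antitoneOn hs hs2 hk hl ht ht' htt'
      · exact absurd (htt'.trans_lt h1) h2
      · exact bub_nonneg hl (le_of_lt ht)
      · exact le_rfl
    have hcomp := lintegral_radial_le (volume : Measure (EuclideanSpace ℝ (Fin n))) μ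
      (f := fun y => ‖y‖) (g := fun x => dist x₀ x) measurable_norm hd (fun _ => norm_nonneg _)
      (fun _ => dist_nonneg) (volume_center hn) h0 hhm hh0 hanti
      (fun y hy => ⟨r, fun t ht => by
        by_contra hlt
        have := ht.2
        simp only [h, if_neg (not_lt.2 (not_le.1 hlt).le)] at this
        linarith⟩)
      (c := ENNReal.ofReal δ⁻¹) ENNReal.ofReal_ne_top (fun ρ hρ hpos => by
        have hρr : ρ ≤ r := by
          by_contra hlt
          have := hpos r hr0 (not_le.1 hlt)
          simp [h] at this
        have e1 : {y : EuclideanSpace ℝ (Fin n) | ‖y‖ ≤ ρ} = closedBall 0 ρ := by ext; simp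
        have e2 : {x | dist x₀ x < ρ} = ball x₀ ρ := by ext; simp [dist_comm]
        have h1 : δ ≤ (μ (ball x₀ ρ)).toReal / (omegaBall n * ρ ^ n) := hr ⟨hρ, hρr⟩
        rw [le_div_iff₀ (by positivity)] at h1
        rw [e1, e2, volume_closedBall_eq hn hρ.le, ← ENNReal.ofReal_toReal (hfin ρ hρ),
          ← ENNReal.ofReal_mul (by positivity)]
        refine ENNReal.ofReal_le_ofReal ?_
        rw [inv_mul_eq_div, le_div_iff₀ hδ0]; linarith)
    have hpt : ∀ t, 0 ≤ t → bub s k l t ≤ h t + A ^ (2 * k + 1) * bub s k 1 t := by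
      intro t ht
      have hb1 := bub_nonneg (s := s) (k := k) one_pos ht
      by_cases htr : t < r
      · simp only [h, if_pos htr]
        have : 0 ≤ A ^ (2 * k + 1) * bub s k 1 t := by positivity
        linarith
      · simp only [h, if_neg htr, zero_add]
        rw [not_lt] at htr
        have ht0 : 0 < t := hr0.trans_le htr
        unfold bub
        rw [← mul_assoc]
        gcongr ?_ * _
        -- t ^ s dominates 1 + t ^ s up to the factor A
        have h1 : 1 + t ^ s ≤ A * t ^ s := by
          have h2 : r ^ s ≤ t ^ s := by gcongr
          have h3 : 1 ≤ 1 / r ^ s * t ^ s := by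
            rw [one_div, inv_mul_eq_div, le_div_iff₀ (by positivity)]; linarith
          rw [hA]; linarith
        calc (l + t ^ s) ^ (-(2 * k + 1)) ≤ (t ^ s) ^ (-(2 * k + 1)) :=
              Real.rpow_le_rpow_of_nonpos (by positivity) (by linarith) (by linarith)
          _ = A ^ (2 * k + 1) * (A * t ^ s) ^ (-(2 * k + 1)) := by
              rw [Real.mul_rpow hA0.le (by positivity), ← mul_assoc, ← Real.rpow_add hA0,
                add_neg_cancel, Real.rpow_zero, one_mul]
          _ ≤ A ^ (2 * k + 1) * (1 + t ^ s) ^ (-(2 * k + 1)) := by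
              gcongr A ^ (2 * k + 1) * ?_
              exact Real.rpow_le_rpow_of_nonpos (by positivity) h1 (by linarith)
    have hG0 : 0 ≤ ∫ x, bub s k l (dist x₀ x) ∂μ :=
      integral_nonneg fun x => bub_nonneg hl dist_nonneg
    have hE' : ∀ lam, 0 < lam → ∫⁻ x : EuclideanSpace ℝ (Fin n), ENNReal.ofReal (bub s k lam ‖x‖) =
        ENNReal.ofReal (lam ^ (-k) * E) := by
      intro lam hlam
      rw [← hE lam hlam, ofReal_integral_eq_lintegral_ofReal
        (integrable_bub_euclid hn hs hk hnk hlam) (ae_of_all _ fun x => bub_nonneg hlam (norm_nonneg _))]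
    have : ENNReal.ofReal (l ^ (-k) * E) ≤
        ENNReal.ofReal (δ⁻¹ * (∫ x, bub s k l (dist x₀ x) ∂μ) + T) := by
      calc ENNReal.ofReal (l ^ (-k) * E)
          = ∫⁻ x : EuclideanSpace ℝ (Fin n), ENNReal.ofReal (bub s k l ‖x‖) := (hE' l hl).symm
        _ ≤ ∫⁻ x : EuclideanSpace ℝ (Fin n), (ENNReal.ofReal (h ‖x‖) +
              ENNReal.ofReal (A ^ (2 * k + 1)) * ENNReal.ofReal (bub s k 1 ‖x‖)) := by
            refine lintegral_mono fun x => ?_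
            rw [← ENNReal.ofReal_mul (by positivity), ← ENNReal.ofReal_add (hh0 _ (norm_nonneg _))
              (mul_nonneg (by positivity) (bub_nonneg one_pos (norm_nonneg _)))]
            exact ENNReal.ofReal_le_ofReal (hpt _ (norm_nonneg _))
        _ = (∫⁻ x : EuclideanSpace ℝ (Fin n), ENNReal.ofReal (h ‖x‖)) + ENNReal.ofReal T := by
            have hm : Measurable fun x : EuclideanSpace ℝ (Fin n) => ENNReal.ofReal (h ‖x‖) :=
              (hhm.comp measurable_norm).ennreal_ofReal
            rw [lintegral_add_left hm,
              lintegral_const_mul' _ _ ENNReal.ofReal_ne_top, hE' 1 one_pos,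
              ← ENNReal.ofReal_mul (by positivity), Real.one_rpow, one_mul]
        _ ≤ ENNReal.ofReal δ⁻¹ * ENNReal.ofReal (∫ x, bub s k l (dist x₀ x) ∂μ) +
              ENNReal.ofReal T := by
            gcongr
            refine hcomp.trans ?_
            rw [ofReal_integral_eq_lintegral_ofReal (hG_int l hl)
              (ae_of_all _ fun x => bub_nonneg hl dist_nonneg)]
            gcongr
            exact hle _ dist_nonneg
        _ = _ := by
            rw [← ENNReal.ofReal_mul (by positivity), ← ENNReal.ofReal_add (by positivity) hT0.le]
    exact (ENNReal.ofReal_le_ofReal_iff (by positivity)).1 this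
  have hinf : Tendsto (fun l : ℝ => l ^ (-k)) (𝓝[>] 0) atTop :=
    tendsto_rpow_neg_nhdsGT_zero (by linarith)
  filter_upwards [hinf.eventually_ge_atTop (δ * T / ((δ - θ) * E)), self_mem_nhdsWithin] with l h1 hl
  have h2 := hmain l hl
  have hδθ : 0 < δ - θ := sub_pos.2 hδ1
  rw [div_le_iff₀ (by positivity)] at h1
  have h3 : δ * (l ^ (-k) * E) ≤ (∫ x, bub s k l (dist x₀ x) ∂μ) + δ * T := by
    calc δ * (l ^ (-k) * E) ≤ δ * (δ⁻¹ * (∫ x, bub s k l (dist x₀ x) ∂μ) + T) := by gcongr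
      _ = _ := by field_simp
  nlinarith

/-! ### The differential inequality and the lower bound -/

/-- `bubble_ckn` rewritten as a differential inequality between `G = ∫ bub` and
`I = ∫ bub'`, using `d ^ s · bub' = bub - λ bub'`. -/
theorem bub_differential_ineq {X : Type*} [MetricSpace X] [ProperSpace X] [MeasurableSpace X]
    [BorelSpace X] (μ : Measure X) (x₀ : X) {a p C s k lam : ℝ} (hCKN : CKNineq μ x₀ a p C)
    (hC : 0 < C) (hs : 0 < s) (hk : 0 < k) (hl : 0 < lam) (hap : a * p = 2 - s)
    (hkp : k * p = 2 * k + 2) (hp : 0 < p)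
    (hG_int : Integrable (fun x => bub s k lam (dist x₀ x)) μ)
    (hG_int' : Integrable (fun x => bub' s k lam (dist x₀ x)) μ) :
    (∫ x, bub' s k lam (dist x₀ x) ∂μ) ^ (k / (k + 1)) ≤
      (C * (s * k)) ^ 2 * ((∫ x, bub s k lam (dist x₀ x) ∂μ) -
        lam * ∫ x, bub' s k lam (dist x₀ x) ∂μ) := by
  have h := bubble_ckn μ x₀ hCKN hs hk hl hap hkp hp
  have hI0 : 0 ≤ ∫ x, bub' s k lam (dist x₀ x) ∂μ :=
    integral_nonneg fun x => bub'_nonneg hl dist_nonneg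
  have e1 : (∫⁻ x, ENNReal.ofReal ((lam + dist x₀ x ^ s) ^ (-(2 * k + 2)) *
      dist x₀ x ^ (-(2 - s))) ∂μ) = ENNReal.ofReal (∫ x, bub' s k lam (dist x₀ x) ∂μ) := by
    rw [ofReal_integral_eq_lintegral_ofReal hG_int'
      (ae_of_all _ fun x => bub'_nonneg hl dist_nonneg)]
    rfl
  have hpt : ∀ x, (s * k) ^ 2 * (dist x₀ x ^ s * ((lam + dist x₀ x ^ s) ^ (-(2 * k + 2)) *
      dist x₀ x ^ (-(2 - s)))) =
      (s * k) ^ 2 * (bub s k lam (dist x₀ x) - lam * bub' s k lam (dist x₀ x)) := by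
    intro x
    rw [bub_eq hl dist_nonneg]
    unfold bub'
    ring
  have hval : ∫ x, (s * k) ^ 2 * (bub s k lam (dist x₀ x) - lam * bub' s k lam (dist x₀ x)) ∂μ =
      (s * k) ^ 2 * ((∫ x, bub s k lam (dist x₀ x) ∂μ) -
        lam * ∫ x, bub' s k lam (dist x₀ x) ∂μ) := by
    rw [integral_const_mul, integral_sub hG_int (hG_int'.const_mul lam), integral_const_mul]
  have hnn : ∀ x, 0 ≤ (s * k) ^ 2 *
      (bub s k lam (dist x₀ x) - lam * bub' s k lam (dist x₀ x)) := by
    intro x; rw [← hpt x]; positivity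
  simp_rw [hpt] at h
  have hi : Integrable (fun x => (s * k) ^ 2 *
      (bub s k lam (dist x₀ x) - lam * bub' s k lam (dist x₀ x))) μ :=
    (hG_int.sub (hG_int'.const_mul lam)).const_mul _
  rw [e1, ← ofReal_integral_eq_lintegral_ofReal hi (ae_of_all _ hnn)] at h
  have hW0 : 0 ≤ ∫ x, (s * k) ^ 2 *
      (bub s k lam (dist x₀ x) - lam * bub' s k lam (dist x₀ x)) ∂μ := integral_nonneg fun x => hnn x
  set W := ∫ x, (s * k) ^ 2 * (bub s k lam (dist x₀ x) - lam * bub' s k lam (dist x₀ x)) ∂μ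
    with hW
  rw [ENNReal.ofReal_rpow_of_nonneg hI0 (by positivity),
    ENNReal.ofReal_rpow_of_nonneg hW0 (by norm_num), ← ENNReal.ofReal_mul hC.le,
    ENNReal.ofReal_le_ofReal_iff (by positivity)] at h
  have h2 := pow_le_pow_left₀ (by positivity) h 2
  rw [mul_pow, ← Real.rpow_natCast (W ^ _), ← Real.rpow_natCast (_ ^ (1 / p)),
    ← Real.rpow_mul hW0, ← Real.rpow_mul hI0] at h2
  have e3 : 1 / p * ((2 : ℕ) : ℝ) = k / (k + 1) := by
    push_cast
    rw [div_mul_eq_mul_div, div_eq_div_iff hp.ne' (by positivity)]; linarith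
  rw [e3, show (1 : ℝ) / 2 * ((2 : ℕ) : ℝ) = 1 by norm_num, Real.rpow_one, hval] at h2
  rw [mul_pow C, mul_assoc]
  exact h2


end

/-- under `(CKN)_C^{x₀}` with `C ≥ K_a`, `(VD)^n_{C₀}` and `(AR)^n_{x₀}` on a
proper metric measure space, `Q̃(λ) ≥ (K_a/C)^{n/(1-a)} Q_E(λ)` for all `λ > 0`. -/
theorem Qtilde_lower_bound {X : Type*} [MetricSpace X] [ProperSpace X]
    [MeasurableSpace X] [BorelSpace X] (μ : Measure X)
    (hvol : ∀ U : Set X, IsOpen U → U.Nonempty → Bornology.IsBounded U → 0 < μ U ∧ μ U < ⊤)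
    (n : ℕ) (hn : 3 ≤ n) (a p : ℝ) (ha0 : 0 ≤ a) (ha1 : a < 1)
    (hp : p = 2 * n / (n - 2 + 2 * a))
    (x₀ : X) (C C₀ : ℝ) (hC : CKNconst n a p ≤ C) (hC₀ : 1 ≤ C₀)
    (hCKN : CKNineq μ x₀ a p C) (hVD : VDcond μ n C₀) (hAR : ARcond μ x₀ n) :
    ∀ lam : ℝ, 0 < lam →
      ENNReal.ofReal ((CKNconst n a p / C) ^ ((n : ℝ) / (1 - a)) * QE n a p lam) ≤
        Qtilde μ x₀ n a p lam := by
  intro lam hlam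
  have hN : (3 : ℝ) ≤ n := by exact_mod_cast hn
  have ha1' : 0 < 1 - a := by linarith
  have hden : 0 < (n : ℝ) - 2 + 2 * a := by linarith
  have hp0 : 0 < p := by rw [hp]; positivity
  obtain ⟨k, hkdef⟩ : ∃ k : ℝ, k = (n - 2 + 2 * a) / (2 * (1 - a)) := ⟨_, rfl⟩
  obtain ⟨s, hsdef⟩ : ∃ s : ℝ, s = 2 - a * p := ⟨_, rfl⟩
  have hk : 0 < k := by rw [hkdef]; positivity
  have hm : (n : ℝ) / (1 - a) = 2 * k + 2 := by rw [hkdef]; field_simp; ring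
  have hkp : k * p = 2 * k + 2 := by rw [← hm, hkdef, hp]; field_simp
  have hsk : s * k = n - 2 := by
    rw [hsdef, hkdef, hp]; field_simp; ring
  have hs : 0 < s := by
    by_contra h
    have : s * k ≤ 0 := mul_nonpos_of_nonpos_of_nonneg (not_lt.1 h) hk.le
    linarith
  have hap : a * p = 2 - s := by rw [hsdef]; ring
  have hs2 : s ≤ 2 := by
    have := mul_nonneg ha0 hp0.le
    linarith
  have hnk : (n : ℝ) = s * k + 2 := by linarith
  have hω := omegaBall_pos n
  have hexp : ((n : ℝ) - 1 + a) / (a - 1) = -(2 * k + 1) := by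
    rw [hkdef]; have : a - 1 ≠ 0 := by linarith
    field_simp; ring
  -- `Q_E` is a multiple of `E λ ^ (-k)`, and `A λ ^ (-k-1)` is the Euclidean integral of `bub'`
  obtain ⟨E, hEdef⟩ : ∃ E : ℝ, E = n * omegaBall n / s *
    (Real.Gamma (k + 1) * Real.Gamma k / Real.Gamma (2 * k + 1)) := ⟨_, rfl⟩
  have hE0 : 0 < E := hEdef ▸ euclid_const_pos hn hs hk
  have hE : ∀ l, 0 < l → ∫ x : EuclideanSpace ℝ (Fin n), bub s k l ‖x‖ = l ^ (-k) * E :=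
    fun l hl => hEdef ▸ bub_euclid hn hs hk hnk hl
  obtain ⟨A, hAdef⟩ : ∃ A : ℝ, A = k * E / (2 * k + 1) := ⟨_, rfl⟩
  have hA0 : 0 < A := by rw [hAdef]; positivity
  have hK : CKNconst n a p =
      (1 / (s * k * (s * (k + 1)))) ^ ((1 : ℝ) / 2) * (1 / A) ^ (1 / (2 * k + 2)) := by
    have hG1 := Real.Gamma_pos_of_pos (by positivity : 0 < k + 1)
    have hG2 := Real.Gamma_pos_of_pos hk
    have hG3 := Real.Gamma_pos_of_pos (by positivity : 0 < 2 * k + 1)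
    have hG4 : Real.Gamma (2 * k + 2) = (2 * k + 1) * Real.Gamma (2 * k + 1) := by
      rw [← Real.Gamma_add_one (by positivity)]; congr 1; ring
    have hG5 : Real.Gamma (k + 1) = k * Real.Gamma k := Real.Gamma_add_one hk.ne'
    have e1 : (n : ℝ) - a * p = s * (k + 1) := by rw [hnk, hap]; ring
    have e2 : (2 * (n : ℝ) - 2 * a * p) = s * (2 * k + 2) := by
      linear_combination 2 * e1
    have hn0 : (0 : ℝ) < n := by linarith
    unfold CKNconst
    rw [e1, e2, ← hsdef, ← hsk, mul_div_cancel_left₀ _ hs.ne', mul_div_cancel_left₀ _ hs.ne', hG4]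
    congr 2
    · rw [hAdef, hEdef, hG5]; field_simp
    · field_simp
  have hK0 : 0 < CKNconst n a p := by rw [hK]; positivity
  have hC0 : 0 < C := hK0.trans_le hC
  have hfin : ∀ r, 0 < r → μ (ball x₀ r) ≠ ⊤ := fun r hr =>
    (hvol _ isOpen_ball ⟨x₀, mem_ball_self hr⟩ isBounded_ball).2.ne
  have hball : ∀ R, 0 < R → μ (ball x₀ R) ≤ ENNReal.ofReal (2 * C₀ * (omegaBall n * R ^ n)) :=
    fun R hR => measure_ball_le hC₀ hfin hVD hAR hR
  have hG_int : ∀ l, 0 < l → Integrable (fun x => bub s k l (dist x₀ x)) μ := fun l hl =>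
    integrable_bub hn hs hs2 hk hnk (by positivity) hball hl
  have hd : Measurable (fun x => dist x₀ x) := (continuous_const.dist continuous_id).measurable
  have hder := fun l (hl : 0 < l) =>
    hasDerivAt_bub_integral μ hd (fun _ => dist_nonneg) hk hG_int hl
  set b := (CKNconst n a p / C) ^ (2 * k + 2) * E with hb
  have hratio : (CKNconst n a p / C) ^ (2 * k + 2) ≤ 1 :=
    Real.rpow_le_one (by positivity) ((div_le_one hC0).2 hC) (by positivity)
  have hb0 : 0 < b := by positivity
  -- the constant `b` is an exact solution; `θ < 1` leaves the room needed by `ode_comparison`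
  have hθ : ∀ θ : ℝ, 0 < θ → θ < 1 →
      θ * b * lam ^ (-k) ≤ ∫ x, bub s k lam (dist x₀ x) ∂μ := by
    intro θ hθ0 hθ1
    refine ode_comparison (G := fun l => ∫ x, bub s k l (dist x₀ x) ∂μ)
      (I := fun l => ∫ x, bub' s k l (dist x₀ x) ∂μ) (M := (C * (s * k)) ^ 2)
      (q := k / (k + 1)) hk (by positivity) (by positivity) (by positivity) (by field_simp)
      (fun l hl => (hder l hl).2)
      (fun l hl => bub_differential_ineq μ x₀ hCKN hC0 hs hk hl hap hkp hp0 (hG_int l hl)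
        (hder l hl).1) ?_ ?_ lam hlam
    · have h := sharp_constant_strict hs hk hA0 hC0 hθ0 hθ1 hK
      have e1 : k * (θ * b) / (2 * k + 1) =
          θ * (CKNconst n a p / C) ^ (2 * k + 2) * A := by
        rw [hb, hAdef]; ring
      have e2 : θ * b = (2 * k + 1) / k * (θ * (CKNconst n a p / C) ^ (2 * k + 2) * A) := by
        rw [← e1]; field_simp
      rw [e1]
      refine lt_of_eq_of_lt ?_ h
      rw [e2]; field_simp; ring
    · filter_upwards [near_zero hn hs hs2 hk hnk hfin hAR (measure_center hn hball) hG_int hE0 hE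
        hθ0 hθ1, self_mem_nhdsWithin] with l h hl
      have hl : 0 < l := hl
      refine le_trans ?_ h
      gcongr
      rw [hb]
      exact mul_le_of_le_one_left hE0.le hratio
  have hfinal : b * lam ^ (-k) ≤ ∫ x, bub s k lam (dist x₀ x) ∂μ := by
    have hlim : Tendsto (fun θ : ℝ => θ * b * lam ^ (-k)) (𝓝[<] 1) (𝓝 (1 * b * lam ^ (-k))) :=
      ((continuous_id.mul continuous_const).mul continuous_const).continuousAt.tendsto.mono_left
        nhdsWithin_le_nhds
    rw [one_mul] at hlim
    refine le_of_tendsto hlim ?_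
    filter_upwards [Ioo_mem_nhdsLT (zero_lt_one' ℝ)] with θ hθ' using hθ θ hθ'.1 hθ'.2
  have hc1 : 0 ≤ (1 - a) / ((n : ℝ) - 1 + a) := div_nonneg ha1'.le (by linarith)
  have hQE : QE n a p lam = (1 - a) / ((n : ℝ) - 1 + a) * (lam ^ (-k) * E) := by
    rw [← hE lam hlam]
    unfold QE bub
    rw [hexp, hap, show 2 - (2 - s) = s by ring]
  have hQt : Qtilde μ x₀ n a p lam = ENNReal.ofReal ((1 - a) / ((n : ℝ) - 1 + a) *
      ∫ x, bub s k lam (dist x₀ x) ∂μ) := by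
    rw [ENNReal.ofReal_mul hc1, ofReal_integral_eq_lintegral_ofReal (hG_int lam hlam)
      (ae_of_all _ fun x => bub_nonneg hlam dist_nonneg)]
    unfold Qtilde bub
    rw [hexp, hap, show 2 - (2 - s) = s by ring]
  rw [hQE, hQt, hm]
  refine ENNReal.ofReal_le_ofReal ?_
  calc (CKNconst n a p / C) ^ (2 * k + 2) * ((1 - a) / ((n : ℝ) - 1 + a) * (lam ^ (-k) * E))
      = (1 - a) / ((n : ℝ) - 1 + a) * (b * lam ^ (-k)) := by rw [hb]; ring
    _ ≤ _ := by gcongr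
end
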